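/- arXiv:2303.08160 — 3 statements merged into one kernel-verified Lean document; each statement's English description precedes it below -/
import Mathlib

section
/- Let K_V^t be a complete t-spread d-partite hypergraph with V(K_V^t) ⊆ [n], V = {V_1, ..., V_d}, |V_j| = n_j, and V_j = [i_j, i_j + n_j − 1] for all j. If v = ∏_{j=1}^{d} x_{i_j}, then v ∈ p \ p² for every minimal prime p of I(K_V^t). -/
/-!
Minimal primes of the edge ideal are generated by the variables of a minimal vertex cover `C`, and
`v` is itself a generator because the left endpoints form a spread edge. So everything reduces to
showing that `C` contains at most one left endpoint.

Suppose `w a, w b ∈ C` with `a < b`. Minimality of `C` provides spread edges `e`, `f` which meet `C`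
only in `w a`, respectively `w b`. Then `f 0, …, f (b-1), e b, …, e (d-1)` is again a spread edge,
since `f (b-1) + t (b-1) ≤ f b = w b ≤ e b`, and it misses `C`, a contradiction.

To pass from this to `v ∉ 𝔭²`, send the variables of `C` to `T` and the others to `1` in `K[T]`:
elements of `𝔭²` become divisible by `T²`, while `v` becomes `1` or `T`. The prime generated by
the variables of `C` is handled as the kernel of the substitution `killVars` (`X i ↦ 0` on `C`).
-/

open MvPolynomial

noncomputable section

/-- `e : Fin d → Fin n` encodes a `𝐭`-spread edge. -/
def IsSpreadEdge (n d : ℕ) (V : Fin d → Finset (Fin n)) (t : ℕ → ℕ) (e : Fin d → Fin n) :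
    Prop :=
  (∀ j, e j ∈ V j) ∧
    ∀ (j : ℕ) (h : j + 1 < d),
      (e ⟨j, Nat.lt_of_succ_lt h⟩ : ℕ) + t j ≤ (e ⟨j + 1, h⟩ : ℕ)

/-- The set of minimal monomial generators `G(I(K_V^𝐭))`. -/
def spreadGens (K : Type) [Field K] (n d : ℕ) (V : Fin d → Finset (Fin n)) (t : ℕ → ℕ) :
    Set (MvPolynomial (Fin n) K) :=
  {m | ∃ e : Fin d → Fin n, IsSpreadEdge n d V t e ∧ m = ∏ j, X (e j)}

/-- The edge ideal `I(K_V^𝐭)`. -/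
def edgeIdeal (K : Type) [Field K] (n d : ℕ) (V : Fin d → Finset (Fin n)) (t : ℕ → ℕ) :
    Ideal (MvPolynomial (Fin n) K) :=
  Ideal.span (spreadGens K n d V t)

/-- The substitution `X i ↦ 0` for `i ∈ C`, fixing the other variables. Its kernel is the
prime ideal generated by the variables indexed by `C`. -/
def killVars (K : Type) [Field K] (n : ℕ) (C : Set (Fin n)) :
    MvPolynomial (Fin n) K →ₐ[K] MvPolynomial (Fin n) K :=
  open Classical in aeval fun i => if i ∈ C then 0 else X i

theorem killVars_X_eq_zero_iff {K : Type} [Field K] {n : ℕ} {C : Set (Fin n)} {i : Fin n} :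
    killVars K n C (X i) = 0 ↔ i ∈ C := by
  by_cases h : i ∈ C <;> simp [killVars, h]

/-- The kernel of `killVars` lies in every ideal containing the killed variables, since modulo such
an ideal the substitution is the identity. -/
theorem ker_killVars_le {K : Type} [Field K] {n : ℕ} {C : Set (Fin n)}
    {p : Ideal (MvPolynomial (Fin n) K)} (h : ∀ i ∈ C, X i ∈ p) :
    RingHom.ker (killVars K n C) ≤ p := by
  have hc : (Ideal.Quotient.mkₐ K p).comp (killVars K n C) = Ideal.Quotient.mkₐ K p := by
    apply MvPolynomial.algHom_ext
    intro i
    by_cases hi : i ∈ C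
    · have := Ideal.Quotient.eq_zero_iff_mem.mpr (h i hi)
      simp [killVars, hi, this]
    · simp [killVars, hi]
  intro f hf
  rw [RingHom.mem_ker] at hf
  have := DFunLike.congr_fun hc f
  rw [AlgHom.comp_apply, hf, map_zero] at this
  exact Ideal.Quotient.eq_zero_iff_mem.mp this.symm

/-- `C` is a vertex cover exactly when the edge ideal is contained in the prime it generates. -/
theorem edgeIdeal_le_ker_killVars {K : Type} [Field K] {n d : ℕ} {V : Fin d → Finset (Fin n)}
    {t : ℕ → ℕ} {C : Set (Fin n)} :
    edgeIdeal K n d V t ≤ RingHom.ker (killVars K n C) ↔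
      ∀ e, IsSpreadEdge n d V t e → ∃ j, e j ∈ C := by
  constructor
  · intro h e he
    have hm : (∏ j, X (e j) : MvPolynomial (Fin n) K) ∈ RingHom.ker (killVars K n C) :=
      h (Ideal.subset_span ⟨e, he, rfl⟩)
    rw [RingHom.mem_ker, map_prod, Finset.prod_eq_zero_iff] at hm
    obtain ⟨j, -, hj⟩ := hm
    exact ⟨j, killVars_X_eq_zero_iff.mp hj⟩
  · intro h
    refine Ideal.span_le.mpr ?_
    rintro _ ⟨e, he, rfl⟩
    obtain ⟨j, hj⟩ := h e he
    rw [SetLike.mem_coe, RingHom.mem_ker, map_prod]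
    exact Finset.prod_eq_zero (Finset.mem_univ j) (killVars_X_eq_zero_iff.mpr hj)

/-- Minimal primes of the edge ideal are generated by the variables of a minimal vertex cover;
minimality is expressed by giving each vertex of the cover an edge met by no other vertex. -/
theorem exists_minimal_cover {K : Type} [Field K] {n d : ℕ} {V : Fin d → Finset (Fin n)}
    {t : ℕ → ℕ} {p : Ideal (MvPolynomial (Fin n) K)} (hp : p ∈ (edgeIdeal K n d V t).minimalPrimes) :
    ∃ C : Set (Fin n), p = RingHom.ker (killVars K n C) ∧
      (∀ e, IsSpreadEdge n d V t e → ∃ j, e j ∈ C) ∧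
      ∀ c ∈ C, ∃ e, IsSpreadEdge n d V t e ∧ ∀ j, e j ∈ C → e j = c := by
  obtain ⟨⟨hprime, hle⟩, hmin⟩ := hp
  have hcov : ∀ e, IsSpreadEdge n d V t e → ∃ j, e j ∈ {i | (X i : MvPolynomial (Fin n) K) ∈ p} := by
    intro e he
    have hm : (∏ j, X (e j) : MvPolynomial (Fin n) K) ∈ p :=
      hle (Ideal.subset_span ⟨e, he, rfl⟩)
    obtain ⟨j, -, hj⟩ := hprime.prod_mem_iff.mp hm
    exact ⟨j, hj⟩
  refine ⟨{i | X i ∈ p}, ?_, hcov, ?_⟩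
  · have hk : RingHom.ker (killVars K n {i | X i ∈ p}) ≤ p := ker_killVars_le fun i hi => hi
    exact le_antisymm
      (hmin ⟨RingHom.ker_isPrime _, edgeIdeal_le_ker_killVars.mpr hcov⟩ hk) hk
  · intro c hc
    by_contra! hno
    -- Otherwise `C \ {c}` is still a cover, and its prime is smaller as it omits `X c`.
    have hcov' : ∀ e, IsSpreadEdge n d V t e →
        ∃ j, e j ∈ ({i | (X i : MvPolynomial (Fin n) K) ∈ p} \ {c} : Set (Fin n)) := by
      intro e he
      obtain ⟨j, hj, hjc⟩ := hno e he
      exact ⟨j, hj, hjc⟩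
    have hle' := hmin ⟨RingHom.ker_isPrime _, edgeIdeal_le_ker_killVars.mpr hcov'⟩
      (ker_killVars_le fun i hi => hi.1)
    exact (killVars_X_eq_zero_iff.mp (hle' hc)).2 rfl

/-- A product of variables of which at most one belongs to `C` is not in the square of the prime
generated by the variables of `C`. -/
theorem prod_X_notMem_ker_killVars_sq {K : Type} [Field K] {n d : ℕ} {C : Set (Fin n)}
    {w : Fin d → Fin n} (hC : ∀ a b, w a ∈ C → w b ∈ C → a = b) :
    (∏ j, X (w j) : MvPolynomial (Fin n) K) ∉ RingHom.ker (killVars K n C) ^ 2 := by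
  classical
  intro hmem
  set φ : MvPolynomial (Fin n) K →ₐ[K] Polynomial K :=
    aeval fun i => if i ∈ C then Polynomial.X else 1 with hφ
  -- Evaluating at `T = 0` after `φ` factors through `killVars`.
  have hcomp : ((Polynomial.aeval (0 : K)).comp φ).comp (killVars K n C) =
      (Polynomial.aeval (0 : K)).comp φ := by
    apply MvPolynomial.algHom_ext
    intro i
    by_cases hi : i ∈ C <;> simp [killVars, hφ, hi]
  have hle : RingHom.ker (killVars K n C) ≤ (Ideal.span {Polynomial.X}).comap φ := by
    intro f hf
    rw [Ideal.mem_comap, Ideal.mem_span_singleton, Polynomial.X_dvd_iff,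
      Polynomial.coeff_zero_eq_aeval_zero]
    have := DFunLike.congr_fun hcomp f
    rw [AlgHom.comp_apply, (RingHom.mem_ker).mp hf, map_zero] at this
    exact this.symm
  have h2 : φ (∏ j, X (w j)) ∈ Ideal.span {(Polynomial.X : Polynomial K)} ^ 2 :=
    Ideal.le_comap_pow φ 2 (Ideal.pow_right_mono hle 2 hmem)
  have hval : φ (∏ j, X (w j)) = Polynomial.X ^ (Finset.univ.filter fun j => w j ∈ C).card := by
    rw [map_prod, ← Finset.prod_const, Finset.prod_filter]
    exact Finset.prod_congr rfl fun j _ => by simp [hφ]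
  rw [hval, Ideal.span_singleton_pow, Ideal.mem_span_singleton,
    pow_dvd_pow_iff Polynomial.X_ne_zero Polynomial.not_isUnit_X] at h2
  have h1 : (Finset.univ.filter fun j => w j ∈ C).card ≤ 1 := by
    rw [Finset.card_le_one]
    intro a ha b hb
    exact hC a b (Finset.mem_filter.mp ha).2 (Finset.mem_filter.mp hb).2
  omega

/-- Splicing two spread edges: the vertices of `f` before position `b`, followed by those of `e`.
The gap at the junction is large enough because `f b ≤ e b`. -/
theorem IsSpreadEdge.splice {n d : ℕ} {V : Fin d → Finset (Fin n)} {t : ℕ → ℕ}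
    {e f : Fin d → Fin n} (he : IsSpreadEdge n d V t e) (hf : IsSpreadEdge n d V t f)
    {b : Fin d} (hb : (f b : ℕ) ≤ e b) :
    IsSpreadEdge n d V t fun j => if j < b then f j else e j := by
  refine ⟨fun j => ?_, fun j h => ?_⟩
  · dsimp only
    split_ifs
    exacts [hf.1 j, he.1 j]
  · have h1 := he.2 j h
    have h2 := hf.2 j h
    simp only [Fin.lt_def]
    rcases lt_trichotomy (j + 1) (b : ℕ) with hlt | heq | hgt
    · rw [if_pos (by omega), if_pos hlt]
      exact h2
    · have hbe : b = ⟨j + 1, h⟩ := Fin.ext heq.symm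
      subst hbe
      rw [if_pos (by simp), if_neg (by simp)]
      exact h2.trans hb
    · rw [if_neg (by omega), if_neg (by omega)]
      exact h1

/-- **Corollary.**  Suppose each part is an integer interval, `V_j = [i_j, i_j + n_j - 1]`
(here `w j` is the left endpoint `i_j` and `mj j = n_j = |V_j|`).  If
`v = ∏_{j=1}^d x_{i_j}`, then `v ∈ 𝔭 \ 𝔭²` for every minimal prime `𝔭` of `I(K_V^𝐭)`. -/
theorem prod_min_mem_minimalPrimes_not_sq
    (K : Type) [Field K] (n d : ℕ) (hd : 0 < d)
    (V : Fin d → Finset (Fin n)) (t : ℕ → ℕ)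
    (ht : ∀ i, 1 ≤ t i)
    (hV : ∀ i j : Fin d, i < j → ∀ p ∈ V i, ∀ q ∈ V j, (p : ℕ) < (q : ℕ))
    (hne : ∀ j, (V j).Nonempty)
    (hiso : ∀ (j : Fin d), ∀ v ∈ V j, ∃ e, IsSpreadEdge n d V t e ∧ e j = v)
    (w : Fin d → Fin n) (mj : Fin d → ℕ) (hm : ∀ j, 0 < mj j)
    (hint : ∀ (j : Fin d) (x : Fin n),
      x ∈ V j ↔ (w j : ℕ) ≤ (x : ℕ) ∧ (x : ℕ) < (w j : ℕ) + mj j) :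
    ∀ p ∈ (edgeIdeal K n d V t).minimalPrimes,
      (∏ j, X (w j) : MvPolynomial (Fin n) K) ∈ p ∧
        (∏ j, X (w j) : MvPolynomial (Fin n) K) ∉ p ^ 2 := by
  intro p hp
  have hw_le : ∀ e, IsSpreadEdge n d V t e → ∀ j, (w j : ℕ) ≤ e j := fun e he j =>
    ((hint j (e j)).mp (he.1 j)).1
  have hwV : ∀ j, w j ∈ V j := fun j => (hint j (w j)).mpr ⟨le_rfl, by have := hm j; omega⟩
  have hw : IsSpreadEdge n d V t w := by
    refine ⟨hwV, fun j h => ?_⟩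
    obtain ⟨e, he, hej⟩ := hiso ⟨j + 1, h⟩ _ (hwV _)
    have h1 := he.2 j h
    have h2 := hw_le e he ⟨j, Nat.lt_of_succ_lt h⟩
    rw [hej] at h1
    omega
  have hdisj : ∀ i j x, x ∈ V i → x ∈ V j → i = j := by
    intro i j x hi hj
    rcases lt_trichotomy i j with h | h | h
    · exact absurd (hV i j h x hi x hj) (lt_irrefl _)
    · exact h
    · exact absurd (hV j i h x hj x hi) (lt_irrefl _)
  refine ⟨hp.1.2 (Ideal.subset_span ⟨w, hw, rfl⟩), ?_⟩
  obtain ⟨C, rfl, hcov, hmin⟩ := exists_minimal_cover hp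
  apply prod_X_notMem_ker_killVars_sq
  have key : ∀ a b, a < b → w a ∈ C → w b ∈ C → False := by
    intro a b hab ha hb
    obtain ⟨e, he, hea⟩ := hmin _ ha
    obtain ⟨f, hf, hfb⟩ := hmin _ hb
    have he' : ∀ j, e j ∈ C → j = a := fun j hj =>
      hdisj j a (e j) (he.1 j) (by rw [hea j hj]; exact hwV a)
    have hf' : ∀ j, f j ∈ C → j = b := fun j hj =>
      hdisj j b (f j) (hf.1 j) (by rw [hfb j hj]; exact hwV b)
    have hfw : f b = w b := by
      obtain ⟨j, hj⟩ := hcov f hf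
      have hjb := hf' j hj
      subst hjb
      exact hfb j hj
    obtain ⟨j, hj⟩ := hcov _ (he.splice hf (b := b) (by rw [hfw]; exact hw_le e he b))
    split_ifs at hj with hjb
    · exact hjb.ne (hf' j hj)
    · exact hjb (he' j hj ▸ hab)
  intro a b ha hb
  rcases lt_trichotomy a b with h | h | h
  · exact (key a b h ha hb).elim
  · exact h
  · exact (key b a h hb ha).elim

end
end

section
/- Let K_V^t be a complete t-spread d-partite hypergraph with V(K_V^t) ⊆ [n], V = {V_1, ..., V_d}, |V_j| = n_j, and V_j = [i_j, i_j + n_j − 1] for all j. Then the edge ideal I(K_V^t) is normally torsion-free; in particular, I(K_V^t) is a normal ideal. -/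
/-!
Spread edges are the source-to-sink paths of a layered digraph, so packing edges into a vector of
vertex capacities is a vertex-capacitated flow problem. The max-flow min-cut property
(`exists_packing`) says that a monomial whose degree along every vertex cover is at least `k` is
divisible by a product of `k` edge monomials. It is proved by an explicit recursion `flowVal` for
the number of partial paths ending below a given vertex: adjacency of two layers is a threshold
condition, so only such initial segments need to be cut off, and the `i`-th path of an optimal
packing takes in each layer the vertex at which `flowVal` first exceeds `i`.

Algebraically, `I ^ k` is the intersection of the `k`-th powers of the primes `(X_i : i ∈ C)`, with
`C` a minimal vertex cover (`mem_edgeIdeal_pow_iff`), and such a power consists of the polynomials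
of order at least `k` along `C`. This order is a valuation. Hence the colon ideals `I ^ k : f` have
as radicals intersections of the primes `(X_i : i ∈ C)`, which are minimal over `I`, so that every
`Ass (S / I ^ k)` is the set of minimal primes of `I`; and comparing orders in an equation of
integral dependence shows that `I ^ k` is integrally closed.
-/

open MvPolynomial

noncomputable section

/-- `x` is integral over the ideal `J`: it satisfies an equation of integral dependence
`x^N + c_1 x^{N-1} + ⋯ + c_N = 0` with `c_i ∈ J^i`. -/
def IsIntegralOverIdeal (R : Type) [CommRing R] (J : Ideal R) (x : R) : Prop :=
  ∃ N : ℕ, 0 < N ∧ ∃ c : ℕ → R, (∀ i, 1 ≤ i → i ≤ N → c i ∈ J ^ i) ∧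
    x ^ N + ∑ i ∈ Finset.Icc 1 N, c i * x ^ (N - i) = 0

/-! ### Max-flow min-cut for spread edges -/

/-- The number of copies of the vertex `c` available in layer `j` when the vertex `v` has
capacity `a v`; it is `0` outside `V_j`, so that layers and vertices can be indexed by `ℕ`. -/
def layerCap (n d : ℕ) (V : Fin d → Finset (Fin n)) (a : Fin n → ℕ) (j c : ℕ) : ℕ :=
  open Classical in
  if h : ∃ (hj : j < d) (hc : c < n), (⟨c, hc⟩ : Fin n) ∈ V ⟨j, hj⟩ then a ⟨c, h.2.1⟩ else 0

/-- `flowVal L t j c` is the largest number of partial spread paths through the layers `0, …, j`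
with last vertex `< c` that can be packed when a vertex `v` has capacity `L i v` in layer `i`.
The recursion is that of the dual problem, the minimal weight of a set of vertices meeting all of
these paths: either `c` is added to the set, or all paths are met before layer `j + 1`. -/
def flowVal (L : ℕ → ℕ → ℕ) (t : ℕ → ℕ) : ℕ → ℕ → ℕ
  | 0, 0 => 0
  | 0, c + 1 => flowVal L t 0 c + L 0 c
  | _ + 1, 0 => 0
  | j + 1, c + 1 => min (flowVal L t (j + 1) c + L (j + 1) c) (flowVal L t j (c + 1 - t j))

section Flow

variable {L : ℕ → ℕ → ℕ} {t : ℕ → ℕ}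

lemma flowVal_zero (j : ℕ) : flowVal L t j 0 = 0 := by
  cases j <;> simp [flowVal]

lemma flowVal_succ_le (j c : ℕ) : flowVal L t j (c + 1) ≤ flowVal L t j c + L j c := by
  cases j <;> simp [flowVal]

lemma flowVal_le_prev (j c : ℕ) : flowVal L t (j + 1) c ≤ flowVal L t j (c - t j) := by
  cases c <;> simp [flowVal]

lemma flowVal_mono (j : ℕ) : Monotone (flowVal L t j) := by
  induction j with
  | zero => exact monotone_nat_of_le_succ fun c => by simp [flowVal]
  | succ j ih =>
    refine monotone_nat_of_le_succ fun c => ?_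
    rw [flowVal.eq_4]
    exact le_min (Nat.le_add_right _ _) ((flowVal_le_prev j c).trans (ih (by omega)))

lemma flowVal_le_of_le {i j : ℕ} (h : i ≤ j) (c : ℕ) : flowVal L t j c ≤ flowVal L t i c := by
  induction h with
  | refl => exact le_rfl
  | step _ ih => exact ((flowVal_le_prev _ _).trans (flowVal_mono _ (Nat.sub_le _ _))).trans ih

end Flow

/-- The cut side of the duality: some set of vertices of weight at most `flowVal` meets every
edge whose vertex in layer `j` is `< c`. -/
lemma exists_cover_le_flowVal {n d : ℕ} {V : Fin d → Finset (Fin n)} {t : ℕ → ℕ} (a : Fin n → ℕ)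
    (j : ℕ) : ∀ (hj : j < d) (c : ℕ), ∃ C : Finset (Fin n),
      ∑ i ∈ C, a i ≤ flowVal (layerCap n d V a) t j c ∧
      ∀ e, IsSpreadEdge n d V t e → (e ⟨j, hj⟩ : ℕ) < c → ∃ i, e i ∈ C := by
  classical
  -- passing from `c` to `c + 1` at the cost of the capacity of `c` in layer `j`
  have add (j : ℕ) (hj : j < d) (c : ℕ) (C : Finset (Fin n))
      (hC : ∀ e, IsSpreadEdge n d V t e → (e ⟨j, hj⟩ : ℕ) < c → ∃ i, e i ∈ C) :
      ∃ C' : Finset (Fin n), ∑ i ∈ C', a i ≤ ∑ i ∈ C, a i + layerCap n d V a j c ∧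
      ∀ e, IsSpreadEdge n d V t e → (e ⟨j, hj⟩ : ℕ) < c + 1 → ∃ i, e i ∈ C' := by
    by_cases h : ∃ (hc : c < n), (⟨c, hc⟩ : Fin n) ∈ V ⟨j, hj⟩
    · obtain ⟨hc, hmem⟩ := h
      refine ⟨insert ⟨c, hc⟩ C, ?_, fun e he hlt => ?_⟩
      · have : layerCap n d V a j c = a ⟨c, hc⟩ := dif_pos ⟨hj, hc, hmem⟩
        rw [this, add_comm]
        by_cases hm : (⟨c, hc⟩ : Fin n) ∈ C
        · rw [Finset.insert_eq_of_mem hm]; omega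
        · rw [Finset.sum_insert hm]
      · rcases Nat.lt_succ_iff_lt_or_eq.1 hlt with h' | h'
        · obtain ⟨i, hi⟩ := hC e he h'
          exact ⟨i, Finset.mem_insert_of_mem hi⟩
        · exact ⟨⟨j, hj⟩, Finset.mem_insert.2 (Or.inl (Fin.ext h'))⟩
    · refine ⟨C, Nat.le_add_right _ _, fun e he hlt => ?_⟩
      rcases Nat.lt_succ_iff_lt_or_eq.1 hlt with h' | h'
      · exact hC e he h'
      · subst h'
        exact absurd ⟨(e ⟨j, hj⟩).2, he.1 ⟨j, hj⟩⟩ h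
  induction j with
  | zero =>
    intro hj c
    induction c with
    | zero => exact ⟨∅, by simp, fun e _ h => absurd h (Nat.not_lt_zero _)⟩
    | succ c ih =>
      obtain ⟨C, h1, h2⟩ := ih
      obtain ⟨C', h3, h4⟩ := add 0 hj c C h2
      exact ⟨C', by rw [flowVal]; omega, h4⟩
  | succ j ihj =>
    intro hj c
    induction c with
    | zero => exact ⟨∅, by simp, fun e _ h => absurd h (Nat.not_lt_zero _)⟩
    | succ c ih =>
      rw [flowVal]
      rcases min_choice (flowVal (layerCap n d V a) t (j + 1) c + layerCap n d V a (j + 1) c)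
        (flowVal (layerCap n d V a) t j (c + 1 - t j)) with h | h <;> rw [h]
      · obtain ⟨C, h1, h2⟩ := ih
        obtain ⟨C', h3, h4⟩ := add (j + 1) hj c C h2
        exact ⟨C', by omega, h4⟩
      · obtain ⟨C, h1, h2⟩ := ihj (by omega) (c + 1 - t j)
        refine ⟨C, h1, fun e he hlt => h2 e he ?_⟩
        have := he.2 j hj
        omega

/-- Integral max-flow min-cut for spread edges: if every vertex cover has weight at least `k`,
then there are `k` edges using each vertex `v` at most `a v` times. The `i`-th edge takes in each
layer the vertex at which `flowVal` first exceeds `i`. -/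
lemma exists_packing {n d : ℕ} (hd : 0 < d) {V : Fin d → Finset (Fin n)} {t : ℕ → ℕ}
    (hV : ∀ i j : Fin d, i < j → ∀ p ∈ V i, ∀ q ∈ V j, (p : ℕ) < (q : ℕ))
    (a : Fin n → ℕ) (k : ℕ)
    (hcov : ∀ C : Finset (Fin n), (∀ e, IsSpreadEdge n d V t e → ∃ j, e j ∈ C) →
      k ≤ ∑ i ∈ C, a i) :
    ∃ E : Fin k → Fin d → Fin n, (∀ i, IsSpreadEdge n d V t (E i)) ∧
      ∀ v, ∑ i, ∑ j, (if E i j = v then 1 else 0) ≤ a v := by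
  classical
  set F := flowVal (layerCap n d V a) t with hF
  have hk : ∀ j, j < d → k ≤ F j n := by
    obtain ⟨C, h1, h2⟩ := exists_cover_le_flowVal (V := V) (t := t) a (d - 1) (by omega) n
    intro j hj
    calc k ≤ ∑ i ∈ C, a i := hcov C fun e he => h2 e he (e _).2
      _ ≤ F (d - 1) n := h1
      _ ≤ F j n := flowVal_le_of_le (by omega) n
  have hex : ∀ (i : Fin k) (j : Fin d), ∃ c, (i : ℕ) < F j (c + 1) := fun i j =>
    ⟨n, (i.2.trans_le (hk j j.2)).trans_le (flowVal_mono _ (Nat.le_succ n))⟩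
  let s : Fin k → Fin d → ℕ := fun i j => Nat.find (hex i j)
  have hs1 : ∀ (i : Fin k) (j : Fin d), (i : ℕ) < F j (s i j + 1) := fun i j => Nat.find_spec (hex i j)
  have hs2 : ∀ (i : Fin k) (j : Fin d), F j (s i j) ≤ (i : ℕ) := by
    intro i j
    rcases hsv : s i j with _ | c
    · rw [hF, flowVal_zero]; exact Nat.zero_le _
    · exact not_lt.1 (Nat.find_min (hex i j) (show c < s i j by omega))
  have hmem : ∀ (i : Fin k) (j : Fin d), ∃ hc : s i j < n, (⟨s i j, hc⟩ : Fin n) ∈ V j := by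
    intro i j
    by_contra hcon
    have h0 : layerCap n d V a j (s i j) = 0 := by
      refine dif_neg fun h => hcon ?_
      obtain ⟨_, hc, h⟩ := h
      exact ⟨hc, h⟩
    have h1 := hs1 i j
    have h2 := hs2 i j
    have h3 : F j (s i j + 1) ≤ F j (s i j) + _ := flowVal_succ_le _ _
    omega
  choose hsn hsV using hmem
  refine ⟨fun i j => ⟨s i j, hsn i j⟩, fun i => ⟨hsV i, fun j hj => ?_⟩, fun v => ?_⟩
  · change s i ⟨j, _⟩ + t j ≤ s i ⟨j + 1, hj⟩
    have h1 : (i : ℕ) < F (j + 1) (s i ⟨j + 1, hj⟩ + 1) := hs1 i ⟨j + 1, hj⟩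
    have h2 : (i : ℕ) < F j (s i ⟨j + 1, hj⟩ + 1 - t j) := h1.trans_le (flowVal_le_prev _ _)
    have h3 : s i ⟨j + 1, hj⟩ + 1 - t j ≠ 0 := by
      intro h0
      rw [h0, hF, flowVal_zero] at h2
      exact Nat.not_lt_zero _ h2
    obtain ⟨c, hc⟩ := Nat.exists_eq_succ_of_ne_zero h3
    rw [hc] at h2
    have : s i ⟨j, Nat.lt_of_succ_lt hj⟩ ≤ c := Nat.find_min' _ h2
    omega
  · by_cases hv : ∃ j, v ∈ V j
    · obtain ⟨j₀, hj₀⟩ := hv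
      have huniq : ∀ j, v ∈ V j → j = j₀ := by
        intro j hj
        rcases lt_trichotomy j j₀ with h | h | h
        · exact absurd (hV _ _ h v hj v hj₀) (lt_irrefl _)
        · exact h
        · exact absurd (hV _ _ h v hj₀ v hj) (lt_irrefl _)
      have hcap : layerCap n d V a j₀ v = a v := dif_pos ⟨j₀.2, v.2, hj₀⟩
      calc ∑ i, ∑ j, (if (⟨s i j, hsn i j⟩ : Fin n) = v then 1 else 0)
          ≤ ∑ i : Fin k, (if (i : ℕ) ∈ Finset.Ico (F j₀ v) (F j₀ (v + 1)) then 1 else 0) := by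
            refine Finset.sum_le_sum fun i _ => ?_
            rw [Finset.sum_eq_single j₀]
            · split_ifs with h1 h2 h2
              · exact le_rfl
              · subst h1
                exact absurd (Finset.mem_Ico.2 ⟨hs2 i j₀, hs1 i j₀⟩) h2
              · exact Nat.zero_le _
              · exact le_rfl
            · intro j _ hne
              refine if_neg fun h => hne (huniq j ?_)
              rw [← h]
              exact hsV i j
            · simp
        _ = ∑ i ∈ Finset.range k, (if i ∈ Finset.Ico (F j₀ v) (F j₀ (v + 1)) then 1 else 0) :=
            Fin.sum_univ_eq_sum_range
              (fun i => if i ∈ Finset.Ico (F j₀ v) (F j₀ (v + 1)) then 1 else 0) k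
        _ = (Finset.range k ∩ Finset.Ico (F j₀ v) (F j₀ (v + 1))).card := by
            rw [← Finset.filter_mem_eq_inter, Finset.card_filter]
        _ ≤ (Finset.Ico (F j₀ v) (F j₀ (v + 1))).card :=
            Finset.card_le_card Finset.inter_subset_right
        _ ≤ a v := by
            rw [Nat.card_Ico]
            have h3 : F j₀ (v + 1) ≤ F j₀ v + _ := flowVal_succ_le _ _
            omega
    · refine le_of_eq_of_le (Finset.sum_eq_zero fun i _ => Finset.sum_eq_zero fun j _ => ?_)
        (Nat.zero_le _)
      refine if_neg fun h => hv ⟨j, ?_⟩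
      rw [← h]
      exact hsV i j

/-! ### Orders along vertex covers -/

/-- The order of `f` along the coordinate subspace `X_i = 0` (`i ∈ C`): the least degree in the
variables `X_i` with `i ∈ C` of a monomial of `f`, with value `⊤` at `f = 0`. -/
def coverOrd {K : Type} [Field K] {n : ℕ} (C : Finset (Fin n)) (f : MvPolynomial (Fin n) K) : ℕ∞ :=
  MvPowerSeries.weightedOrder (fun i => if i ∈ C then 1 else 0) (f : MvPowerSeries (Fin n) K)

section Order

variable {K : Type} [Field K] {n : ℕ} (C : Finset (Fin n))

lemma weight_cover (m : Fin n →₀ ℕ) :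
    Finsupp.weight (fun i => if i ∈ C then 1 else 0) m = ∑ i ∈ C, m i := by
  rw [Finsupp.weight_apply, Finsupp.sum_fintype _ _ (by simp)]
  simp [Finset.sum_ite_mem]

lemma le_coverOrd_iff (k : ℕ) (f : MvPolynomial (Fin n) K) :
    (k : ℕ∞) ≤ coverOrd C f ↔ ∀ m ∈ f.support, k ≤ ∑ i ∈ C, m i := by
  constructor
  · intro h m hm
    have h1 : coverOrd C f ≤ _ := MvPowerSeries.weightedOrder_le (d := m)
      (fun i => if i ∈ C then 1 else 0)
      (by rwa [MvPolynomial.coeff_coe, ← MvPolynomial.mem_support_iff])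
    rw [weight_cover] at h1
    exact_mod_cast h.trans h1
  · intro h
    refine MvPowerSeries.nat_le_weightedOrder _ fun m hm => ?_
    rw [MvPolynomial.coeff_coe]
    by_contra hne
    have := h m (MvPolynomial.mem_support_iff.2 hne)
    rw [weight_cover] at hm
    omega

lemma coverOrd_mul (f g : MvPolynomial (Fin n) K) :
    coverOrd C (f * g) = coverOrd C f + coverOrd C g := by
  rw [coverOrd, MvPolynomial.coe_mul, MvPowerSeries.weightedOrder_mul]
  rfl

lemma coverOrd_one : coverOrd C (1 : MvPolynomial (Fin n) K) = 0 := by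
  rw [coverOrd, MvPolynomial.coe_one, MvPowerSeries.weightedOrder_one]

lemma coverOrd_pow (f : MvPolynomial (Fin n) K) (k : ℕ) :
    coverOrd C (f ^ k) = k * coverOrd C f := by
  induction k with
  | zero => simp [coverOrd_one]
  | succ k ih => rw [pow_succ, coverOrd_mul, ih]; push_cast; ring

/-- The `k`-th power of the prime ideal `(X_i : i ∈ C)`, described by orders. -/
def coverIdeal (K : Type) [Field K] {n : ℕ} (C : Finset (Fin n)) (k : ℕ) :
    Ideal (MvPolynomial (Fin n) K) where
  carrier := {f | (k : ℕ∞) ≤ coverOrd C f}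
  add_mem' {f g} hf hg := by
    rw [Set.mem_ofPred_eq] at hf hg ⊢
    refine (le_min hf hg).trans ?_
    simp only [coverOrd, MvPolynomial.coe_add]
    exact MvPowerSeries.min_weightedOrder_le_add _
  zero_mem' := by simp [coverOrd]
  smul_mem' c f hf := by
    simp only [smul_eq_mul, Set.mem_ofPred_eq, coverOrd_mul] at hf ⊢
    exact hf.trans le_add_self

lemma mem_coverIdeal {k : ℕ} {f : MvPolynomial (Fin n) K} :
    f ∈ coverIdeal K C k ↔ (k : ℕ∞) ≤ coverOrd C f := Iff.rfl

instance coverIdeal_isPrime : (coverIdeal K C 1).IsPrime := by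
  refine Ideal.isPrime_iff.2 ⟨?_, fun {f g} h => ?_⟩
  · rw [Ideal.ne_top_iff_one, mem_coverIdeal, coverOrd_one]
    simp
  · simp only [mem_coverIdeal, coverOrd_mul, Nat.cast_one, Order.one_le_iff_ne_zero] at h ⊢
    by_contra! hcon
    exact h (by rw [hcon.1, hcon.2, add_zero])

lemma X_mem_coverIdeal {i : Fin n} : (X i : MvPolynomial (Fin n) K) ∈ coverIdeal K C 1 ↔ i ∈ C := by
  rw [mem_coverIdeal, le_coverOrd_iff]
  by_cases h : i ∈ C <;> simp [MvPolynomial.support_X, Finsupp.single_apply, h]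

lemma coverIdeal_one_le {P : Ideal (MvPolynomial (Fin n) K)} (h : ∀ i ∈ C, X i ∈ P) :
    coverIdeal K C 1 ≤ P := by
  intro f hf
  rw [mem_coverIdeal, le_coverOrd_iff] at hf
  have h1 : f ∈ Ideal.span (X '' (C : Set (Fin n))) := by
    refine MvPolynomial.mem_ideal_span_X_image.2 fun m hm => ?_
    by_contra! hcon
    have h2 := hf m hm
    rw [Finset.sum_eq_zero fun i hi => hcon i hi] at h2
    omega
  refine Ideal.span_le.2 ?_ h1
  rintro _ ⟨i, hi, rfl⟩
  exact h i hi

end Order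

/-! ### Powers of the edge ideal -/

/-- `C` is a vertex cover: it meets every spread edge. -/
def IsCover {n d : ℕ} (V : Fin d → Finset (Fin n)) (t : ℕ → ℕ) (C : Finset (Fin n)) : Prop :=
  ∀ e, IsSpreadEdge n d V t e → ∃ j, e j ∈ C

section EdgeIdeal

variable {K : Type} [Field K] {n d : ℕ} {V : Fin d → Finset (Fin n)} {t : ℕ → ℕ}

lemma edgeIdeal_le_coverIdeal {C : Finset (Fin n)} (hC : IsCover V t C) :
    edgeIdeal K n d V t ≤ coverIdeal K C 1 := by
  refine Ideal.span_le.2 ?_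
  rintro _ ⟨e, he, rfl⟩
  obtain ⟨j, hj⟩ := hC e he
  exact Ideal.IsPrime.prod_mem_iff.2 ⟨j, Finset.mem_univ _, (X_mem_coverIdeal C).2 hj⟩

lemma edgeIdeal_pow_le_coverIdeal {C : Finset (Fin n)} (hC : IsCover V t C) (k : ℕ) :
    edgeIdeal K n d V t ^ k ≤ coverIdeal K C k := by
  induction k with
  | zero => intro f _; simp [mem_coverIdeal]
  | succ k ih =>
    rw [pow_succ, Ideal.mul_le]
    intro f hf g hg
    have hg' := edgeIdeal_le_coverIdeal hC hg
    have hf' := ih hf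
    rw [mem_coverIdeal] at hf' hg' ⊢
    rw [coverOrd_mul, Nat.cast_add]
    exact add_le_add hf' hg'

/-- A monomial divisible by a product of `k` edge monomials lies in the `k`-th power. -/
lemma monomial_mem_edgeIdeal_pow {k : ℕ} (E : Fin k → Fin d → Fin n)
    (hE : ∀ i, IsSpreadEdge n d V t (E i)) (m : Fin n →₀ ℕ) (c : K)
    (hm : ∀ v, ∑ i, ∑ j, (if E i j = v then 1 else 0) ≤ m v) :
    monomial m c ∈ edgeIdeal K n d V t ^ k := by
  have h1 : ∏ i, ∏ j, (X (E i j) : MvPolynomial (Fin n) K) ∈ edgeIdeal K n d V t ^ k := by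
    have h := Ideal.prod_mem_prod (s := Finset.univ) (I := fun _ : Fin k => edgeIdeal K n d V t)
      (x := fun i => ∏ j, X (E i j)) fun i _ => Ideal.subset_span ⟨E i, hE i, rfl⟩
    simpa using h
  have h2 : ∏ i, ∏ j, (X (E i j) : MvPolynomial (Fin n) K) =
      monomial (∑ i, ∑ j, Finsupp.single (E i j) 1) 1 := by
    simp_rw [monomial_sum_one]
    rfl
  rw [h2] at h1
  refine Ideal.mem_of_dvd _ ?_ h1
  rw [monomial_dvd_monomial]
  refine ⟨Or.inr fun v => le_of_eq_of_le ?_ (hm v), one_dvd _⟩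
  simp [Finsupp.finsetSum_apply, Finsupp.single_apply]

/-- The ordinary powers of the edge ideal equal its symbolic powers. -/
lemma mem_edgeIdeal_pow_iff (hd : 0 < d)
    (hV : ∀ i j : Fin d, i < j → ∀ p ∈ V i, ∀ q ∈ V j, (p : ℕ) < (q : ℕ)) (k : ℕ)
    (f : MvPolynomial (Fin n) K) :
    f ∈ edgeIdeal K n d V t ^ k ↔ ∀ C, Minimal (IsCover V t) C → (k : ℕ∞) ≤ coverOrd C f := by
  refine ⟨fun h C hC => edgeIdeal_pow_le_coverIdeal hC.1 k h, fun h => ?_⟩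
  rw [f.as_sum]
  refine Ideal.sum_mem _ fun m hm => ?_
  obtain ⟨E, hE, hEm⟩ := exists_packing hd (t := t) hV (fun v => m v) k fun C hC => by
    obtain ⟨C', hle, hC'⟩ := exists_minimal_le_of_wellFoundedLT (IsCover V t) C hC
    exact ((le_coverOrd_iff C' k f).1 (h C' hC') m hm).trans
      (Finset.sum_le_sum_of_subset hle)
  exact monomial_mem_edgeIdeal_pow E hE m _ hEm

lemma coverIdeal_mem_minimalPrimes {C : Finset (Fin n)} (hC : Minimal (IsCover V t) C) :
    coverIdeal K C 1 ∈ (edgeIdeal K n d V t).minimalPrimes := by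
  classical
  refine ⟨⟨inferInstance, edgeIdeal_le_coverIdeal hC.1⟩, fun P hP hle => ?_⟩
  have hPp := hP.1
  -- the variables lying in `P` form a vertex cover contained in `C`
  have hcov : IsCover V t (Finset.univ.filter fun i => (X i : MvPolynomial (Fin n) K) ∈ P) := by
    intro e he
    have h1 : ∏ j, (X (e j) : MvPolynomial (Fin n) K) ∈ P :=
      hP.2 (Ideal.subset_span ⟨e, he, rfl⟩)
    obtain ⟨j, -, hj⟩ := Ideal.IsPrime.prod_mem_iff.1 h1
    exact ⟨j, by simpa using hj⟩
  have hsub := hC.2 hcov fun i hi => (X_mem_coverIdeal C).1 (hle (Finset.mem_filter.1 hi).2)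
  exact coverIdeal_one_le C fun i hi => (Finset.mem_filter.1 (hsub hi)).2

/-- Every power of the edge ideal has no embedded primes, and its associated primes are the
minimal primes of the edge ideal itself. -/
lemma associatedPrimes_edgeIdeal_pow (hd : 0 < d)
    (hV : ∀ i j : Fin d, i < j → ∀ p ∈ V i, ∀ q ∈ V j, (p : ℕ) < (q : ℕ)) {k : ℕ} (hk : 1 ≤ k) :
    associatedPrimes (MvPolynomial (Fin n) K)
      (MvPolynomial (Fin n) K ⧸ (edgeIdeal K n d V t ^ k)) =
      (edgeIdeal K n d V t).minimalPrimes := by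
  classical
  refine Set.Subset.antisymm (fun P hP => ?_) ?_
  · obtain ⟨hPp, x, hx⟩ := hP
    obtain ⟨f, rfl⟩ := Ideal.Quotient.mk_surjective x
    have hmem : ∀ g, g ∈ P ↔ ∃ r : ℕ, g ^ r * f ∈ edgeIdeal K n d V t ^ k := by
      intro g
      rw [hx, Ideal.mem_radical_iff]
      refine exists_congr fun r => ?_
      rw [Submodule.mem_colon_singleton, Submodule.mem_bot, ← Ideal.Quotient.eq_zero_iff_mem]
      rfl
    set T : Finset (Finset (Fin n)) :=
      Finset.univ.filter fun C => Minimal (IsCover V t) C ∧ coverOrd C f < k with hT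
    have hle : ∀ C ∈ T, P ≤ coverIdeal K C 1 := by
      intro C hC g hg
      obtain ⟨-, hC, hlt⟩ := Finset.mem_filter.1 hC
      obtain ⟨r, hr⟩ := (hmem g).1 hg
      have h1 := (mem_edgeIdeal_pow_iff hd hV k _).1 hr C hC
      rw [coverOrd_mul, coverOrd_pow] at h1
      rw [mem_coverIdeal, Nat.cast_one, Order.one_le_iff_ne_zero]
      intro h0
      rw [h0, mul_zero, zero_add] at h1
      exact absurd hlt (not_lt.2 h1)
    have hge : T.inf (fun C => coverIdeal K C 1) ≤ P := by
      intro g hg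
      rw [hmem]
      refine ⟨k, (mem_edgeIdeal_pow_iff hd hV k _).2 fun C hC => ?_⟩
      rw [coverOrd_mul, coverOrd_pow]
      by_cases hlt : coverOrd C f < k
      · have hCT : C ∈ T := Finset.mem_filter.2 ⟨Finset.mem_univ _, hC, hlt⟩
        have h1 : g ∈ coverIdeal K C 1 :=
          Finset.inf_le (f := fun C => coverIdeal K C 1) hCT hg
        rw [mem_coverIdeal, Nat.cast_one] at h1
        calc (k : ℕ∞) = k * 1 := (mul_one _).symm
          _ ≤ k * coverOrd C g := by gcongr
          _ ≤ _ := le_self_add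
      · exact (not_lt.1 hlt).trans le_add_self
    obtain ⟨C, hC, hCP⟩ := (Ideal.IsPrime.inf_le' hPp).1 hge
    rw [le_antisymm (hle C hC) hCP]
    exact coverIdeal_mem_minimalPrimes (Finset.mem_filter.1 hC).2.1
  · have h := Module.associatedPrimes.minimalPrimes_annihilator_subset_associatedPrimes
      (MvPolynomial (Fin n) K) (MvPolynomial (Fin n) K ⧸ (edgeIdeal K n d V t ^ k))
    rwa [Ideal.annihilator_quotient, ← Ideal.radical_minimalPrimes,
      Ideal.radical_pow _ (by omega), Ideal.radical_minimalPrimes] at h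

/-- The valuative criterion: an element integral over `I ^ k` has order at least `k` along every
vertex cover. -/
lemma le_coverOrd_of_isIntegral {C : Finset (Fin n)} (hC : IsCover V t C) {k : ℕ}
    {x : MvPolynomial (Fin n) K}
    (hx : IsIntegralOverIdeal (MvPolynomial (Fin n) K) (edgeIdeal K n d V t ^ k) x) :
    (k : ℕ∞) ≤ coverOrd C x := by
  obtain ⟨N, hN, c, hc, heq⟩ := hx
  by_contra! hlt
  obtain ⟨v, hv⟩ := ENat.ne_top_iff_exists.1 hlt.ne_top
  rw [← hv, Nat.cast_lt] at hlt
  -- all lower terms have order larger than `N * v`, the order of `x ^ N`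
  have h1 : ∑ i ∈ Finset.Icc 1 N, c i * x ^ (N - i) ∈ coverIdeal K C (N * v + 1) := by
    refine Ideal.sum_mem _ fun i hi => ?_
    obtain ⟨hi1, hiN⟩ := Finset.mem_Icc.1 hi
    have h2 := hc i hi1 hiN
    rw [← pow_mul] at h2
    have h3 := edgeIdeal_pow_le_coverIdeal hC _ h2
    rw [mem_coverIdeal] at h3 ⊢
    rw [coverOrd_mul, coverOrd_pow, ← hv]
    refine le_trans ?_ (add_le_add h3 le_rfl)
    norm_cast
    obtain ⟨r, rfl⟩ := Nat.exists_eq_add_of_le hiN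
    rw [Nat.add_sub_cancel_left]
    nlinarith
  have h4 : x ^ N ∈ coverIdeal K C (N * v + 1) := by
    rw [eq_neg_of_add_eq_zero_left heq]
    exact neg_mem h1
  rw [mem_coverIdeal, coverOrd_pow, ← hv] at h4
  norm_cast at h4
  omega

end EdgeIdeal

/-- **Theorem.**  If each part is an integer interval `V_j = [i_j, i_j + n_j - 1]`
(`w j` is the left endpoint, `mj j = n_j`), then `I(K_V^𝐭)` is normally torsion-free
(`Ass(S/I^k) = Ass(S/I)` for all `k ≥ 1`); in particular `I(K_V^𝐭)` is a normal ideal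
(all powers are integrally closed). -/
theorem edgeIdeal_normally_torsion_free_and_normal
    (K : Type) [Field K] (n d : ℕ) (hd : 0 < d)
    (V : Fin d → Finset (Fin n)) (t : ℕ → ℕ)
    (ht : ∀ i, 1 ≤ t i)
    (hV : ∀ i j : Fin d, i < j → ∀ p ∈ V i, ∀ q ∈ V j, (p : ℕ) < (q : ℕ))
    (hne : ∀ j, (V j).Nonempty)
    (hiso : ∀ (j : Fin d), ∀ v ∈ V j, ∃ e, IsSpreadEdge n d V t e ∧ e j = v)
    (w : Fin d → Fin n) (mj : Fin d → ℕ) (hm : ∀ j, 0 < mj j)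
    (hint : ∀ (j : Fin d) (x : Fin n),
      x ∈ V j ↔ (w j : ℕ) ≤ (x : ℕ) ∧ (x : ℕ) < (w j : ℕ) + mj j) :
    (∀ k : ℕ, 1 ≤ k →
      associatedPrimes (MvPolynomial (Fin n) K)
          (MvPolynomial (Fin n) K ⧸ (edgeIdeal K n d V t ^ k)) =
        associatedPrimes (MvPolynomial (Fin n) K)
          (MvPolynomial (Fin n) K ⧸ edgeIdeal K n d V t)) ∧
    (∀ k : ℕ, 1 ≤ k → ∀ x : MvPolynomial (Fin n) K,
      IsIntegralOverIdeal (MvPolynomial (Fin n) K) (edgeIdeal K n d V t ^ k) x →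
        x ∈ edgeIdeal K n d V t ^ k) := by
  refine ⟨fun k hk => ?_, fun k _ x hx => ?_⟩
  · rw [associatedPrimes_edgeIdeal_pow hd hV hk]
    have h := associatedPrimes_edgeIdeal_pow (K := K) (t := t) hd hV le_rfl
    rw [pow_one] at h
    exact h.symm
  · exact (mem_edgeIdeal_pow_iff hd hV k x).2 fun C hC => le_coverOrd_of_isIntegral hC.1 hx

end
end

section
/- The edge ideal I(K_V^t) of a complete t-spread d-partite hypergraph has a d-linear resolution: its graded Betti numbers satisfy β_{i,j}(I(K_V^t)) = 0 for all i and all j ≠ i + d. -/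
/-!
Let `S = K[x_1, …, x_n]`. The edge ideal is linear because it is built up by splittings
`I = x_a I₁ + I₂` with `I₂ ⊆ I₁` and `I₂` generated by monomials not involving `x_a`. Take `x_a`
to be the smallest admissible first vertex: `x_a I₁` collects the spread sets starting at `a`, so
`I₁` is an ideal of the same kind with one part fewer, and `I₂` collects the spread sets starting
later. Removing the first vertex of a spread set that starts after `a` leaves a set that may also
follow `a`, which is the inclusion `I₂ ⊆ I₁`. The exact sequence
`0 → I₂(-1) → I₁(-1) ⊕ I₂ → I → 0` then transports linearity (`lin_split`), and induction on the
number of parts and on `a` gives the result for all ideals of this kind (`lin_spreadIdeal`).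

Linearity is handled without `Tor`. A graded module is represented by the family of its
homogeneous pieces inside an ambient `S`-module, and `Lin i` says that the first `i` steps of a
linear free resolution exist: a cover by a free module generated in degree `d`, whose kernel
satisfies `Lin (i - 1)` in degree `d + 1`. Unfolding one step at a time makes the horseshoe lemma
(`Lin.horseshoe`) and the lemma on cokernels (`Lin.coker`) short inductions.

A given minimal graded free resolution is compared with this notion syzygy by syzygy: minimal
generators of a module generated in degree `d` have degree `d` (`Lin.degree_eq`), and since minimal
covers are unique up to isomorphism the kernel of the given cover is again linear (`Lin.kernel`).
-/

open MvPolynomial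

noncomputable section

/-- `(r, dg, φ, ε)` is a *minimal graded free resolution* of the graded ideal `J` over
`S = K[x_1, …, x_n]`:

`⋯ → F_2 → F_1 → F_0 → J → 0`,

where `F_i` is the graded free module with basis `Fin (r i)` whose `k`-th basis element has
degree `dg i k` (i.e. `F_i = ⊕_j S(-j)^{β_{i,j}}` with `β_{i,j} = #\{k ∣ dg i k = j\}`),
the maps are graded of degree `0`, the complex is exact, and minimality means that all matrix
entries of the differentials lie in the graded maximal ideal `(x_1, …, x_n)`.  The degrees
`dg i ·` (with multiplicity) are exactly the graded Betti numbers `β_{i,j}(J)` of `J`. -/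
def IsMinimalGradedFreeResolution (K : Type) [Field K] (n : ℕ)
    (J : Ideal (MvPolynomial (Fin n) K))
    (r : ℕ → ℕ) (dg : (i : ℕ) → Fin (r i) → ℕ)
    (φ : (i : ℕ) → ((Fin (r (i + 1)) → MvPolynomial (Fin n) K) →ₗ[MvPolynomial (Fin n) K]
      (Fin (r i) → MvPolynomial (Fin n) K)))
    (ε : (Fin (r 0) → MvPolynomial (Fin n) K) →ₗ[MvPolynomial (Fin n) K]
      MvPolynomial (Fin n) K) : Prop :=
  -- the augmentation maps `F_0` onto `J`
  LinearMap.range ε = J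
  -- exactness
  ∧ LinearMap.ker ε = LinearMap.range (φ 0)
  ∧ (∀ i : ℕ, LinearMap.ker (φ i) = LinearMap.range (φ (i + 1)))
  -- the maps are graded (degree-preserving): images of basis elements are homogeneous of
  -- the right degrees
  ∧ (∀ k : Fin (r 0), (ε (Pi.single k 1)).IsHomogeneous (dg 0 k))
  ∧ (∀ (i : ℕ) (k : Fin (r (i + 1))) (j : Fin (r i)),
      φ i (Pi.single k 1) j = 0 ∨
        ∃ c : ℕ, dg (i + 1) k = dg i j + c ∧ (φ i (Pi.single k 1) j).IsHomogeneous c)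
  -- minimality: all entries of the differentials lie in `(x_1, …, x_n)`
  ∧ (∀ (i : ℕ) (k : Fin (r (i + 1))) (j : Fin (r i)),
      constantCoeff (φ i (Pi.single k 1) j) = 0)

namespace SpreadLin

/-! ### Homogeneous polynomials with integer degrees -/

section Graded

variable {K : Type} [Field K] {n : ℕ}

/-- The polynomials all of whose monomials have degree `z`. The degree is an integer so that
shifts of gradings need no truncation; the piece is zero for `z < 0`. -/
def hom (K : Type) [Field K] (n : ℕ) (z : ℤ) : AddSubgroup (MvPolynomial (Fin n) K) where
  carrier := {p | ∀ m, coeff m p ≠ 0 → (m.degree : ℤ) = z}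
  zero_mem' := by intro m h; simp at h
  add_mem' := by
    intro p q hp hq m h
    rw [coeff_add] at h
    by_cases h1 : coeff m p = 0
    · exact hq m (by simpa [h1] using h)
    · exact hp m h1
  neg_mem' := by
    intro p hp m h
    exact hp m (by simpa using h)

theorem mem_hom {z : ℤ} {p : MvPolynomial (Fin n) K} :
    p ∈ hom K n z ↔ ∀ m, coeff m p ≠ 0 → (m.degree : ℤ) = z := Iff.rfl

theorem hom_neg {z : ℤ} (hz : z < 0) {p : MvPolynomial (Fin n) K} (hp : p ∈ hom K n z) :
    p = 0 := by
  ext m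
  by_contra h
  have := hp m (by simpa using h)
  omega

theorem mul_mem_hom {a b : ℤ} {p q : MvPolynomial (Fin n) K} (hp : p ∈ hom K n a)
    (hq : q ∈ hom K n b) : p * q ∈ hom K n (a + b) := by
  classical
  intro m h
  rw [coeff_mul] at h
  obtain ⟨x, hx, hx'⟩ := Finset.exists_ne_zero_of_sum_ne_zero h
  have h1 := hp _ (left_ne_zero_of_mul hx')
  have h2 := hq _ (right_ne_zero_of_mul hx')
  rw [Finset.HasAntidiagonal.mem_antidiagonal] at hx
  rw [← hx, map_add]
  push_cast
  omega

theorem X_mem_hom (a : Fin n) : (X a : MvPolynomial (Fin n) K) ∈ hom K n 1 := by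
  classical
  intro m h
  rw [coeff_X] at h
  have : Finsupp.single a 1 = m := by
    by_contra h'
    simp [h'] at h
  subst this
  simp

theorem mem_hom_of_isHomogeneous {p : MvPolynomial (Fin n) K} {c : ℕ} (hp : p.IsHomogeneous c) :
    p ∈ hom K n c := by
  intro m h
  have := hp h
  have h1 : Finsupp.degree m = Finsupp.weight 1 m :=
    DFunLike.congr_fun Finsupp.degree_eq_weight_one m
  rw [h1, this]

theorem one_mem_hom : (1 : MvPolynomial (Fin n) K) ∈ hom K n 0 :=
  mem_hom_of_isHomogeneous (isHomogeneous_one _ _)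

/-- The homogeneous component of integer degree `z`. -/
def comp (z : ℤ) (p : MvPolynomial (Fin n) K) : MvPolynomial (Fin n) K :=
  if 0 ≤ z then homogeneousComponent z.toNat p else 0

theorem coeff_comp (z : ℤ) (p : MvPolynomial (Fin n) K) (m : Fin n →₀ ℕ) :
    coeff m (comp z p) = if (m.degree : ℤ) = z then coeff m p else 0 := by
  unfold comp
  by_cases hz : 0 ≤ z
  · rw [if_pos hz, coeff_homogeneousComponent]
    have : m.degree = z.toNat ↔ (m.degree : ℤ) = z := by omega
    simp only [this]
  · have : ¬ (m.degree : ℤ) = z := by omega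
    rw [if_neg hz, if_neg this, coeff_zero]

theorem comp_mem (z : ℤ) (p : MvPolynomial (Fin n) K) : comp z p ∈ hom K n z := by
  intro m h
  rw [coeff_comp] at h
  by_contra h'
  simp [h'] at h

theorem comp_eq_self {z : ℤ} {p : MvPolynomial (Fin n) K} (hp : p ∈ hom K n z) :
    comp z p = p := by
  ext m
  rw [coeff_comp]
  split_ifs with h
  · rfl
  · by_contra h'
    exact h (hp m (Ne.symm h'))

theorem comp_add (z : ℤ) (p q : MvPolynomial (Fin n) K) :
    comp z (p + q) = comp z p + comp z q := by
  ext m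
  simp only [coeff_comp, coeff_add]
  split_ifs <;> simp

theorem comp_sum {ι : Type} (s : Finset ι) (z : ℤ) (p : ι → MvPolynomial (Fin n) K) :
    comp z (∑ k ∈ s, p k) = ∑ k ∈ s, comp z (p k) := by
  ext m
  simp only [coeff_comp, coeff_sum]
  split_ifs <;> simp

/-- Multiplication by a homogeneous polynomial of degree `c` shifts homogeneous components by
`c`. -/
theorem comp_mul {z c : ℤ} {p : MvPolynomial (Fin n) K} (hp : p ∈ hom K n c)
    (q : MvPolynomial (Fin n) K) : comp z (q * p) = comp (z - c) q * p := by
  classical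
  ext m
  rw [coeff_comp, coeff_mul, coeff_mul]
  split_ifs with h
  · refine Finset.sum_congr rfl fun x hx => ?_
    rw [Finset.HasAntidiagonal.mem_antidiagonal] at hx
    by_cases h0 : coeff x.2 p = 0
    · simp [h0]
    · have := hp _ h0
      rw [← hx, map_add] at h
      push_cast at h
      rw [coeff_comp, if_pos (by omega)]
  · symm
    refine Finset.sum_eq_zero fun x hx => ?_
    rw [Finset.HasAntidiagonal.mem_antidiagonal] at hx
    by_cases h0 : coeff x.2 p = 0
    · simp [h0]
    · have := hp _ h0
      rw [← hx, map_add] at h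
      push_cast at h
      rw [coeff_comp, if_neg (by omega), zero_mul]

theorem mul_comp {z c : ℤ} {p : MvPolynomial (Fin n) K} (hp : p ∈ hom K n c)
    (q : MvPolynomial (Fin n) K) : comp z (p * q) = p * comp (z - c) q := by
  rw [mul_comm, comp_mul hp, mul_comm]

/-! ### Linear resolutions, one step at a time -/

/-- Compatibility of a family of subgroups with the grading of the polynomial ring. The graded
module meant by such a family is the sum of its pieces; the ambient module may be larger. -/
def IsGr {M : Type} [AddCommGroup M] [Module (MvPolynomial (Fin n) K) M]
    (gr : ℤ → AddSubgroup M) : Prop :=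
  ∀ (c j : ℤ) (p : MvPolynomial (Fin n) K) (m : M), p ∈ hom K n c → m ∈ gr j → p • m ∈ gr (c + j)

/-- The graded pieces of the free module with basis `ι`, the basis element `k` having degree
`dg k`. -/
def freePc (K : Type) [Field K] (n : ℕ) {ι : Type} (dg : ι → ℤ) (j : ℤ) :
    AddSubgroup (ι → MvPolynomial (Fin n) K) where
  carrier := {y | ∀ k, y k ∈ hom K n (j - dg k)}
  zero_mem' := fun _ => zero_mem _
  add_mem' := fun hx hy k => add_mem (hx k) (hy k)
  neg_mem' := fun hx k => neg_mem (hx k)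

theorem mem_freePc {ι : Type} {dg : ι → ℤ} {j : ℤ} {y : ι → MvPolynomial (Fin n) K} :
    y ∈ freePc K n dg j ↔ ∀ k, y k ∈ hom K n (j - dg k) := Iff.rfl

/-- The graded pieces of the module of relations among the elements `v k` of degree `dg k`. -/
def kerPc {ι M : Type} [Fintype ι] [AddCommGroup M] [Module (MvPolynomial (Fin n) K) M]
    (dg : ι → ℤ) (v : ι → M) (j : ℤ) : AddSubgroup (ι → MvPolynomial (Fin n) K) :=
  freePc K n dg j ⊓
    (LinearMap.ker (Fintype.linearCombination (MvPolynomial (Fin n) K) v)).toAddSubgroup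

theorem mem_kerPc {ι M : Type} [Fintype ι] [AddCommGroup M] [Module (MvPolynomial (Fin n) K) M]
    {dg : ι → ℤ} {v : ι → M} {j : ℤ} {y : ι → MvPolynomial (Fin n) K} :
    y ∈ kerPc dg v j ↔ (∀ k, y k ∈ hom K n (j - dg k)) ∧ ∑ k, y k • v k = 0 := by
  simp [kerPc, mem_freePc, Fintype.linearCombination_apply]

/-- `Lin i M gr d`: the graded module with pieces `gr` has the first `i` steps of a graded free
resolution which is linear and starts in degree `d`: for `i > 0` the module is generated by
finitely many elements of degree `d`, whose module of relations satisfies the condition for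
`i - 1` and `d + 1`. -/
def Lin (K : Type) [Field K] (n : ℕ) : ℕ → ∀ (M : Type) [AddCommGroup M]
    [Module (MvPolynomial (Fin n) K) M], (ℤ → AddSubgroup M) → ℤ → Prop
  | 0, _, _, _, _, _ => True
  | i + 1, M, _, _, gr, d => ∃ (ι : Type) (_ : Fintype ι) (v : ι → M),
      (∀ k, v k ∈ gr d) ∧
      (∀ j, ∀ m ∈ gr j, ∃ y ∈ freePc K n (fun _ : ι => d) j, ∑ k, y k • v k = m) ∧
      Lin K n i (ι → MvPolynomial (Fin n) K) (kerPc (fun _ => d) v) (d + 1)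

section

variable {A B C : Type} [AddCommGroup A] [Module (MvPolynomial (Fin n) K) A]
  [AddCommGroup B] [Module (MvPolynomial (Fin n) K) B]
  [AddCommGroup C] [Module (MvPolynomial (Fin n) K) C]
  {gA : ℤ → AddSubgroup A} {gB : ℤ → AddSubgroup B} {gC : ℤ → AddSubgroup C}

theorem isGr_freePc {ι : Type} (dg : ι → ℤ) : IsGr (K := K) (n := n) (freePc K n dg) := by
  intro c j p m hp hm k
  have := mul_mem_hom hp (hm k)
  rw [show c + j - dg k = c + (j - dg k) by ring]
  exact this

theorem isGr_kerPc {ι : Type} [Fintype ι] (dg : ι → ℤ) (v : ι → A) :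
    IsGr (K := K) (n := n) (kerPc (K := K) (n := n) dg v) := by
  intro c j p m hp hm
  rw [mem_kerPc] at hm ⊢
  refine ⟨isGr_freePc dg c j p m hp hm.1, ?_⟩
  have : ∑ k, (p • m) k • v k = p • ∑ k, m k • v k := by
    rw [Finset.smul_sum]
    simp [mul_smul]
  rw [this, hm.2, smul_zero]

theorem sum_mem_gr (hA : IsGr (K := K) (n := n) gA) {ι : Type} [Fintype ι] {dg : ι → ℤ}
    {v : ι → A} (hv : ∀ k, v k ∈ gA (dg k)) {j : ℤ} {y : ι → MvPolynomial (Fin n) K}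
    (hy : y ∈ freePc K n dg j) : ∑ k, y k • v k ∈ gA j := by
  refine sum_mem fun k _ => ?_
  have := hA _ _ _ _ (hy k) (hv k)
  rwa [sub_add_cancel] at this

/-- The zero module is linear in every degree, through the empty set of generators. -/
theorem Lin.of_zero (hA : ∀ j, ∀ m ∈ gA j, m = 0) (i : ℕ) (d : ℤ) : Lin K n i A gA d := by
  induction i generalizing A d with
  | zero => trivial
  | succ i ih =>
    refine ⟨Empty, inferInstance, Empty.elim, fun k => k.elim, ?_, ih ?_ _⟩
    · intro j m hm
      exact ⟨0, zero_mem _, by simp [hA j m hm]⟩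
    · intro j m _
      exact Subsingleton.elim _ _

/-- Twisting the grading by `e` raises the degree of the generators by `e`. -/
theorem Lin.shift {gA' : ℤ → AddSubgroup A} {i : ℕ} {d e : ℤ} (h : Lin K n i A gA d)
    (hg : ∀ j, gA' j = gA (j - e)) : Lin K n i A gA' (d + e) := by
  induction i generalizing A d with
  | zero => trivial
  | succ i ih =>
    obtain ⟨ι, _, v, hv, hs, hk⟩ := h
    have key : ∀ j, freePc K n (fun _ : ι => d + e) j = freePc K n (fun _ : ι => d) (j - e) := by
      intro j
      ext y
      simp only [mem_freePc]
      rw [show j - (d + e) = j - e - d by ring]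
    refine ⟨ι, inferInstance, v, ?_, ?_, ?_⟩
    · intro k
      rw [hg, add_sub_cancel_right]
      exact hv k
    · intro j m hm
      rw [hg] at hm
      rw [key]
      exact hs _ _ hm
    · rw [show d + e + 1 = d + 1 + e by ring]
      refine ih hk fun j => ?_
      unfold kerPc
      rw [key]

/-- The property `Lin` passes to the image under an injective map. -/
theorem Lin.map {i : ℕ} {d : ℤ} (h : Lin K n i A gA d)
    (f : A →ₗ[MvPolynomial (Fin n) K] B) (hf : ∀ a, f a = 0 → a = 0)
    (hAB : ∀ j, ∀ a ∈ gA j, f a ∈ gB j) (hBA : ∀ j, ∀ b ∈ gB j, ∃ a ∈ gA j, f a = b) :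
    Lin K n i B gB d := by
  cases i with
  | zero => trivial
  | succ i =>
    obtain ⟨ι, _, v, hv, hs, hk⟩ := h
    have key : ∀ y : ι → MvPolynomial (Fin n) K, ∑ k, y k • f (v k) = f (∑ k, y k • v k) := by
      intro y
      simp
    refine ⟨ι, inferInstance, fun k => f (v k), fun k => hAB _ _ (hv k), ?_, ?_⟩
    · intro j m hm
      obtain ⟨a, ha, rfl⟩ := hBA j m hm
      obtain ⟨y, hy, rfl⟩ := hs j a ha
      exact ⟨y, hy, key y⟩
    · convert hk using 1
      funext j
      ext y
      rw [mem_kerPc, mem_kerPc, key]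
      refine and_congr_right fun _ => ⟨hf _, fun h => by rw [h, map_zero]⟩

/-- The graded horseshoe lemma: in a degreewise exact sequence `0 → A → B → C → 0` whose outer
terms have linear resolutions starting in degree `d`, so does the middle term. -/
theorem Lin.horseshoe {i : ℕ} {d : ℤ} (hB : IsGr (K := K) (n := n) gB)
    (f : A →ₗ[MvPolynomial (Fin n) K] B) (g : B →ₗ[MvPolynomial (Fin n) K] C)
    (hf : ∀ j, ∀ a ∈ gA j, f a ∈ gB j) (hf0 : ∀ j, ∀ a ∈ gA j, f a = 0 → a = 0)
    (hgf : ∀ j, ∀ a ∈ gA j, g (f a) = 0)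
    (hg : ∀ j, ∀ b ∈ gB j, g b ∈ gC j) (hgs : ∀ j, ∀ c ∈ gC j, ∃ b ∈ gB j, g b = c)
    (hex : ∀ j, ∀ b ∈ gB j, g b = 0 → ∃ a ∈ gA j, f a = b)
    (hA : IsGr (K := K) (n := n) gA)
    (hLA : Lin K n i A gA d) (hLC : Lin K n i C gC d) : Lin K n i B gB d := by
  induction i generalizing A B C d with
  | zero => trivial
  | succ i ih =>
    obtain ⟨ι, _, v, hv, hvs, hvk⟩ := hLA
    obtain ⟨κ, _, w, hw, hws, hwk⟩ := hLC
    choose b hb hbw using fun k => hgs d (w k) (hw k)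
    have hbg : ∀ y : κ → MvPolynomial (Fin n) K, g (∑ k, y k • b k) = ∑ k, y k • w k := by
      intro y
      simp [hbw]
    have hvf : ∀ y : ι → MvPolynomial (Fin n) K, ∑ k, y k • f (v k) = f (∑ k, y k • v k) := by
      intro y
      simp
    -- Once the image of `m` in `C` is written through the `w k`, the same coefficients on the
    -- lifts `b k` account for `m` up to an element of `A`.
    have lift : ∀ j, ∀ m ∈ gB j, ∀ y ∈ freePc K n (fun _ : κ => d) j, ∑ k, y k • w k = g m →
        ∃ x ∈ freePc K n (fun _ : ι => d) j, ∑ k, x k • f (v k) + ∑ k, y k • b k = m := by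
      intro j m hm y hy hym
      have h1 : m - ∑ k, y k • b k ∈ gB j := sub_mem hm (sum_mem_gr hB hb hy)
      obtain ⟨a, ha, hfa⟩ := hex j _ h1 (by rw [map_sub, hbg, hym, sub_self])
      obtain ⟨x, hx, rfl⟩ := hvs j a ha
      exact ⟨x, hx, by rw [hvf, hfa, sub_add_cancel]⟩
    refine ⟨ι ⊕ κ, inferInstance, Sum.elim (fun k => f (v k)) b, ?_, ?_, ?_⟩
    · rintro (k | k)
      · exact hf _ _ (hv k)
      · exact hb k
    · intro j m hm
      obtain ⟨y, hy, hym⟩ := hws j _ (hg j m hm)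
      obtain ⟨x, hx, hxm⟩ := lift j m hm y hy hym
      refine ⟨Sum.elim x y, ?_, ?_⟩
      · rintro (k | k)
        · exact hx k
        · exact hy k
      · simpa [Fintype.sum_sum_type] using hxm
    · let inc : (ι → MvPolynomial (Fin n) K) →ₗ[MvPolynomial (Fin n) K]
          (ι ⊕ κ → MvPolynomial (Fin n) K) :=
        { toFun := fun x => Sum.elim x 0
          map_add' := by intro x y; funext k; cases k <;> simp
          map_smul' := by intro c x; funext k; cases k <;> simp }
      refine ih (isGr_kerPc _ _) inc (LinearMap.funLeft _ _ Sum.inr) ?_ ?_ ?_ ?_ ?_ ?_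
        (isGr_kerPc _ _) hvk hwk
      · intro j x hx
        rw [mem_kerPc] at hx ⊢
        refine ⟨?_, ?_⟩
        · rintro (k | k)
          · exact hx.1 k
          · exact zero_mem _
        · simp [inc, Fintype.sum_sum_type, hvf, hx.2]
      · intro j x _ hx
        funext k
        exact congrFun hx (Sum.inl k)
      · intro j x _
        rfl
      · intro j y hy
        rw [mem_kerPc] at hy ⊢
        refine ⟨fun k => hy.1 (Sum.inr k), ?_⟩
        have := congrArg g hy.2
        rw [Fintype.sum_sum_type] at this
        simpa [fun k => hgf d (v k) (hv k), hbw] using this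
      · intro j y hy
        rw [mem_kerPc] at hy
        obtain ⟨x, hx, hxm⟩ := lift j 0 (zero_mem _) y hy.1 (by rw [hy.2, map_zero])
        refine ⟨Sum.elim x y, ?_, ?_⟩
        · rw [mem_kerPc]
          refine ⟨?_, ?_⟩
          · rintro (k | k)
            · exact hx k
            · exact hy.1 k
          · simpa [Fintype.sum_sum_type] using hxm
        · rfl
      · intro j y hy hy0
        rw [mem_kerPc] at hy
        have hy0' : ∀ k, y (Sum.inr k) = 0 := fun k => congrFun hy0 k
        refine ⟨fun k => y (Sum.inl k), ?_, ?_⟩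
        · rw [mem_kerPc]
          refine ⟨fun k => hy.1 (Sum.inl k), ?_⟩
          have h2 := hy.2
          rw [Fintype.sum_sum_type] at h2
          simp only [Sum.elim_inl, Sum.elim_inr, hy0', zero_smul, Finset.sum_const_zero,
            add_zero] at h2
          rw [hvf] at h2
          exact hf0 j _ (sum_mem_gr hA hv fun k => hy.1 (Sum.inl k)) h2
        · funext k
          rcases k with k | k
          · rfl
          · exact (hy0' k).symm

/-- In a degreewise exact sequence `0 → A → B → C → 0` with `B` linear starting in degree `d`
and `A` linear starting in degree `d + 1`, the cokernel `C` is linear starting in degree `d`: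
the relations of `C` are an extension of `A` by the relations of `B`. The retraction `ρ` of
the inclusion `A → B` makes the map onto `A` in this extension linear on the whole free
module. -/
theorem Lin.coker {i : ℕ} {d : ℤ} (hB : IsGr (K := K) (n := n) gB)
    (f : A →ₗ[MvPolynomial (Fin n) K] B) (g : B →ₗ[MvPolynomial (Fin n) K] C)
    (ρ : B →ₗ[MvPolynomial (Fin n) K] A) (hρ : ∀ a, ρ (f a) = a)
    (hf : ∀ j, ∀ a ∈ gA j, f a ∈ gB j) (hgf : ∀ j, ∀ a ∈ gA j, g (f a) = 0)
    (hg : ∀ j, ∀ b ∈ gB j, g b ∈ gC j) (hgs : ∀ j, ∀ c ∈ gC j, ∃ b ∈ gB j, g b = c)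
    (hex : ∀ j, ∀ b ∈ gB j, g b = 0 → ∃ a ∈ gA j, f a = b)
    (hLA : Lin K n i A gA (d + 1)) (hLB : Lin K n (i + 1) B gB d) :
    Lin K n (i + 1) C gC d := by
  obtain ⟨ι, _, v, hv, hvs, hvk⟩ := hLB
  have hvg : ∀ y : ι → MvPolynomial (Fin n) K, ∑ k, y k • g (v k) = g (∑ k, y k • v k) := by
    intro y
    simp
  refine ⟨ι, inferInstance, fun k => g (v k), fun k => hg _ _ (hv k), ?_, ?_⟩
  · intro j c hc
    obtain ⟨b, hb, rfl⟩ := hgs j c hc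
    obtain ⟨y, hy, rfl⟩ := hvs j b hb
    exact ⟨y, hy, hvg y⟩
  · refine Lin.horseshoe (isGr_kerPc _ _) (A := ι → MvPolynomial (Fin n) K) (C := A)
      (gA := kerPc (fun _ => d) v) LinearMap.id
      (ρ ∘ₗ Fintype.linearCombination (MvPolynomial (Fin n) K) v) ?_ ?_ ?_ ?_ ?_ ?_
      (isGr_kerPc _ _) hvk hLA
    · intro j y hy
      rw [mem_kerPc] at hy ⊢
      refine ⟨hy.1, ?_⟩
      simp only [LinearMap.id_apply]
      rw [hvg, hy.2, map_zero]
    · intro j y _ hy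
      exact hy
    · intro j y hy
      rw [mem_kerPc] at hy
      simp [Fintype.linearCombination_apply, hy.2]
    · intro j y hy
      rw [mem_kerPc, hvg] at hy
      obtain ⟨a, ha, hfa⟩ := hex j _ (sum_mem_gr hB hv hy.1) hy.2
      rw [LinearMap.comp_apply, Fintype.linearCombination_apply, ← hfa, hρ]
      exact ha
    · intro j a ha
      obtain ⟨y, hy, hya⟩ := hvs j _ (hf j a ha)
      refine ⟨y, ?_, ?_⟩
      · rw [mem_kerPc, hvg, hya, hgf j a ha]
        exact ⟨hy, rfl⟩
      · rw [LinearMap.comp_apply, Fintype.linearCombination_apply, hya, hρ]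
    · intro j y hy hy0
      rw [mem_kerPc, hvg] at hy
      obtain ⟨a, ha, hfa⟩ := hex j _ (sum_mem_gr hB hv hy.1) hy.2
      refine ⟨y, ?_, rfl⟩
      rw [LinearMap.comp_apply, Fintype.linearCombination_apply, ← hfa, hρ] at hy0
      rw [mem_kerPc, ← hfa, hy0, map_zero]
      exact ⟨hy.1, rfl⟩

end

/-! ### Splitting an ideal along a variable -/

/-- The graded pieces of an ideal. -/
def idealPc (I : Ideal (MvPolynomial (Fin n) K)) (j : ℤ) : AddSubgroup (MvPolynomial (Fin n) K) :=
  I.toAddSubgroup ⊓ hom K n j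

theorem mem_idealPc {I : Ideal (MvPolynomial (Fin n) K)} {j : ℤ} {p : MvPolynomial (Fin n) K} :
    p ∈ idealPc I j ↔ p ∈ I ∧ p ∈ hom K n j := Iff.rfl

theorem isGr_idealPc (I : Ideal (MvPolynomial (Fin n) K)) :
    IsGr (K := K) (n := n) (idealPc I) := by
  intro c j p m hp hm
  exact ⟨I.mul_mem_left p hm.1, mul_mem_hom hp hm.2⟩

/-- Let `I₂ ⊆ I₁` be homogeneous ideals with `x_a` a nonzerodivisor modulo `I₂`. Then
`x_a I₁ + I₂` is linear in degree `d + 1` as soon as `I₁` and `I₂` are linear in degrees `d` and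
`d + 1`, because of the exact sequence `0 → I₂(-1) → I₁(-1) ⊕ I₂ → x_a I₁ + I₂ → 0`, whose first
map is `u ↦ (u, -x_a u)`. -/
theorem lin_split {I₁ I₂ : Ideal (MvPolynomial (Fin n) K)} {a : Fin n} {d : ℤ}
    (h21 : I₂ ≤ I₁) (hcolon : ∀ u, X a * u ∈ I₂ → u ∈ I₂)
    (hom1 : ∀ z, ∀ p ∈ I₁, comp z p ∈ I₁) (hom2 : ∀ z, ∀ p ∈ I₂, comp z p ∈ I₂)
    (h1 : ∀ i, Lin K n i _ (idealPc I₁) d) (h2 : ∀ i, Lin K n i _ (idealPc I₂) (d + 1)) (i : ℕ) :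
    Lin K n i _ (idealPc (Ideal.span {X a} * I₁ ⊔ I₂)) (d + 1) := by
  cases i with
  | zero => trivial
  | succ i =>
    let S := MvPolynomial (Fin n) K
    let gA : ℤ → AddSubgroup S := fun j => idealPc I₂ (j - 1)
    let gP : ℤ → AddSubgroup S := fun j => idealPc I₁ (j - 1)
    let gB : ℤ → AddSubgroup (S × S) := fun j => (gP j).prod (idealPc I₂ j)
    have hA : Lin K n i S gA (d + 1 + 1) := (h2 i).shift fun _ => rfl
    have hP : Lin K n (i + 1) S gP (d + 1) := (h1 (i + 1)).shift fun _ => rfl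
    have grP : IsGr (K := K) (n := n) gP := by
      intro c j p m hp hm
      have := isGr_idealPc I₁ c (j - 1) p m hp hm
      rwa [← add_sub_assoc] at this
    have grB : IsGr (K := K) (n := n) gB := by
      intro c j p m hp hm
      exact ⟨grP c j p m.1 hp hm.1, isGr_idealPc I₂ c j p m.2 hp hm.2⟩
    have hX : ∀ j, ∀ u ∈ hom K n (j - 1), X a * u ∈ hom K n j := by
      intro j u hu
      have := mul_mem_hom (X_mem_hom a) hu
      rwa [add_sub_cancel] at this
    have hB : Lin K n (i + 1) (S × S) gB (d + 1) := by
      refine Lin.horseshoe grB (LinearMap.inl S S S) (LinearMap.snd S S S) (gA := gP)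
        (gC := idealPc I₂) ?_ ?_ ?_ ?_ ?_ ?_ grP hP (h2 (i + 1))
      · intro j u hu
        exact ⟨hu, zero_mem _⟩
      · intro j u _ hu
        exact congrArg Prod.fst hu
      · intro j u _
        rfl
      · intro j b hb
        exact hb.2
      · intro j c hc
        exact ⟨(0, c), ⟨zero_mem _, hc⟩, rfl⟩
      · intro j b hb hb0
        exact ⟨b.1, hb.1, Prod.ext rfl (Eq.symm hb0)⟩
    refine Lin.coker grB (gA := gA)
      (LinearMap.prod LinearMap.id (-LinearMap.mulLeft S (X a : S)))
      (LinearMap.coprod (LinearMap.mulLeft S (X a : S)) LinearMap.id) (LinearMap.fst S S S)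
      ?_ ?_ ?_ ?_ ?_ ?_ hA hB
    · intro u
      rfl
    · intro j u hu
      refine ⟨⟨h21 hu.1, hu.2⟩, ?_⟩
      exact (idealPc I₂ j).neg_mem ⟨I₂.mul_mem_left _ hu.1, hX j u hu.2⟩
    · intro j u _
      simp
    · rintro j ⟨u, v⟩ ⟨hu, hv⟩
      refine ⟨?_, ?_⟩
      · exact add_mem (Ideal.mem_sup_left
          (Ideal.mul_mem_mul (Ideal.mem_span_singleton_self _) hu.1)) (Ideal.mem_sup_right hv.1)
      · exact add_mem (hX j u hu.2) hv.2
    · rintro j c ⟨hc, hcj⟩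
      obtain ⟨y, hy, v, hv, rfl⟩ := Submodule.mem_sup.1 (show c ∈ Ideal.span {X a} * I₁ ⊔ I₂ from hc)
      obtain ⟨u, hu, rfl⟩ := Ideal.mem_span_singleton_mul.1 hy
      refine ⟨(comp (j - 1) u, comp j v), ⟨⟨hom1 _ _ hu, comp_mem _ _⟩, ⟨hom2 _ _ hv, comp_mem _ _⟩⟩, ?_⟩
      have := comp_eq_self hcj
      rw [comp_add, mul_comp (X_mem_hom a)] at this
      exact this
    · rintro j ⟨u, v⟩ ⟨hu, hv⟩ h0
      have h0' : X a * u + v = 0 := h0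
      have huv : -(X a * u) = v := (eq_neg_of_add_eq_zero_right h0').symm
      refine ⟨u, ⟨hcolon u ?_, hu.2⟩, Prod.ext rfl huv⟩
      rw [← neg_neg (X a * u), huv]
      exact neg_mem hv.1

/-! ### The ideals of spread sets -/

/-- Exponents of the monomials `x_{v_1} ⋯ x_{v_d}` with `v_j ∈ V (s + j - 1)`, with gaps
`v_{j+1} - v_j ≥ t (s + j - 1)`, and with `v_1 ≥ a`. -/
def spreadExp (V : ℕ → Finset (Fin n)) (t : ℕ → ℕ) : ℕ → ℕ → ℕ → Set (Fin n →₀ ℕ)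
  | 0, _, _ => {0}
  | d + 1, s, a => {m | ∃ v ∈ V s, a ≤ (v : ℕ) ∧
      ∃ m' ∈ spreadExp V t d (s + 1) (v + t s), m = Finsupp.single v 1 + m'}

/-- The ideal generated by the monomials with exponent in `spreadExp`. -/
def spreadIdeal (K : Type) [Field K] (V : ℕ → Finset (Fin n)) (t : ℕ → ℕ) (d s a : ℕ) :
    Ideal (MvPolynomial (Fin n) K) :=
  Ideal.span ((fun m => monomial m (1 : K)) '' spreadExp V t d s a)

variable {V : ℕ → Finset (Fin n)} {t : ℕ → ℕ}

theorem mem_spreadIdeal {d s a : ℕ} {p : MvPolynomial (Fin n) K} :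
    p ∈ spreadIdeal K V t d s a ↔
      ∀ m, coeff m p ≠ 0 → ∃ m' ∈ spreadExp V t d s a, m' ≤ m := by
  unfold spreadIdeal
  rw [mem_ideal_span_monomial_image]
  simp only [mem_support_iff]

theorem comp_mem_spreadIdeal {d s a : ℕ} (z : ℤ) (p : MvPolynomial (Fin n) K)
    (hp : p ∈ spreadIdeal K V t d s a) : comp z p ∈ spreadIdeal K V t d s a := by
  rw [mem_spreadIdeal] at hp ⊢
  intro m hm
  refine hp m fun h => hm ?_
  rw [coeff_comp, h, ite_self]

theorem spreadExp_mono {d s a b : ℕ} (hab : a ≤ b) : spreadExp V t d s b ⊆ spreadExp V t d s a := by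
  cases d with
  | zero => exact subset_rfl
  | succ d =>
    rintro m ⟨v, hv, hb, h⟩
    exact ⟨v, hv, hab.trans hb, h⟩

theorem spreadExp_eq_zero {d s a : ℕ} {m : Fin n →₀ ℕ} (hm : m ∈ spreadExp V t d s a) (u : Fin n)
    (hu : (u : ℕ) < a) : m u = 0 := by
  induction d generalizing s a m with
  | zero =>
    rw [Set.mem_singleton_iff.1 hm]
    rfl
  | succ d ih =>
    obtain ⟨v, hv, hav, m', hm', rfl⟩ := hm
    have huv : v ≠ u := by
      rintro rfl
      omega
    rw [Finsupp.add_apply, Finsupp.single_eq_of_ne huv.symm, ih hm' (by omega)]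

/-- Dropping the first vertex `v > a` of a spread set leaves a set that may follow `a`. -/
theorem spreadIdeal_succ_le {d s a : ℕ} :
    spreadIdeal K V t (d + 1) s (a + 1) ≤ spreadIdeal K V t d (s + 1) (a + t s) := by
  intro p hp
  rw [mem_spreadIdeal] at hp ⊢
  intro m hm
  obtain ⟨_, ⟨v, hv, hav, m', hm', rfl⟩, hle⟩ := hp m hm
  exact ⟨m', spreadExp_mono (by omega) hm', le_trans le_add_self hle⟩

/-- The generators of `spreadIdeal K V t d s (a + 1)` do not involve `x_a`. -/
theorem spreadIdeal_colon {d s : ℕ} {a : Fin n} (u : MvPolynomial (Fin n) K)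
    (hu : X a * u ∈ spreadIdeal K V t d s (a + 1)) : u ∈ spreadIdeal K V t d s (a + 1) := by
  rw [mem_spreadIdeal] at hu ⊢
  intro m hm
  obtain ⟨m', hm', hle⟩ := hu (Finsupp.single a 1 + m) (by rwa [coeff_X_mul])
  refine ⟨m', hm', fun w => ?_⟩
  by_cases hw : w = a
  · rw [spreadExp_eq_zero hm' w (by rw [hw]; omega)]
    exact Nat.zero_le _
  · have := hle w
    rwa [Finsupp.add_apply, Finsupp.single_eq_of_ne hw, zero_add] at this

theorem spreadIdeal_split {d s : ℕ} {a : Fin n} (ha : a ∈ V s) :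
    spreadIdeal K V t (d + 1) s a =
      Ideal.span {X a} * spreadIdeal K V t d (s + 1) (a + t s) ⊔
        spreadIdeal K V t (d + 1) s (a + 1) := by
  unfold spreadIdeal
  rw [Ideal.span_mul_span', ← Ideal.span_union]
  congr 1
  ext p
  simp only [Set.mem_image, Set.mem_union, Set.singleton_mul]
  constructor
  · rintro ⟨_, ⟨v, hv, hav, m', hm', rfl⟩, rfl⟩
    by_cases h : v = a
    · subst h
      left
      refine ⟨_, ⟨m', hm', rfl⟩, ?_⟩
      simp [X, monomial_mul]
    · have : (v : ℕ) ≠ a := fun h' => h (Fin.ext h')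
      exact Or.inr ⟨_, ⟨v, hv, by omega, m', hm', rfl⟩, rfl⟩
  · rintro (⟨_, ⟨m', hm', rfl⟩, rfl⟩ | ⟨m, hm, rfl⟩)
    · refine ⟨_, ⟨a, ha, le_rfl, m', hm', rfl⟩, ?_⟩
      simp [X, monomial_mul]
    · exact ⟨m, spreadExp_mono (Nat.le_succ _) hm, rfl⟩

theorem spreadExp_skip {d s a : ℕ} (ha : ∀ v ∈ V s, (v : ℕ) ≠ a) :
    spreadExp V t (d + 1) s a = spreadExp V t (d + 1) s (a + 1) := by
  refine Set.Subset.antisymm ?_ (spreadExp_mono (Nat.le_succ _))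
  rintro m ⟨v, hv, hav, h⟩
  have := ha v hv
  exact ⟨v, hv, by omega, h⟩

/-- Induction on `d` and, for fixed `d`, downwards on the lower bound `a` of the first vertex:
splitting along `x_a` separates the spread sets starting at `a` from those starting later. -/
theorem lin_spreadIdeal (d : ℕ) : ∀ (s a i : ℕ),
    Lin K n i _ (idealPc (spreadIdeal K V t d s a)) d := by
  induction d with
  | zero =>
    intro s a i
    cases i with
    | zero => trivial
    | succ i =>
      have htop : ∀ p : MvPolynomial (Fin n) K, p ∈ spreadIdeal K V t 0 s a := by
        intro p
        rw [mem_spreadIdeal]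
        exact fun m _ => ⟨0, rfl, zero_le⟩
      refine ⟨Unit, inferInstance, fun _ => 1, fun _ => ⟨htop _, ?_⟩, ?_, Lin.of_zero ?_ _ _⟩
      · exact one_mem_hom
      · intro j m hm
        exact ⟨fun _ => m, fun _ => by simpa using hm.2, by simp⟩
      · intro j y hy
        rw [mem_kerPc] at hy
        funext k
        simpa using hy.2
  | succ d ih =>
    intro s a
    by_cases hle : a ≤ n
    · induction hle using Nat.decreasingInduction with
      | self =>
        intro i
        refine Lin.of_zero (fun j p hp => ?_) _ _
        ext m
        by_contra h
        obtain ⟨_, ⟨v, _, hv, _⟩, _⟩ := mem_spreadIdeal.1 hp.1 m (by simpa using h)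
        omega
      | of_succ a ha iha =>
        by_cases hav : (⟨a, ha⟩ : Fin n) ∈ V s
        · have := lin_split (K := K) (a := ⟨a, ha⟩) (d := d) (spreadIdeal_succ_le (V := V) (t := t))
            (spreadIdeal_colon (a := ⟨a, ha⟩)) comp_mem_spreadIdeal comp_mem_spreadIdeal
            (ih (s + 1) (a + t s)) (by exact_mod_cast iha)
          rw [← spreadIdeal_split hav] at this
          exact_mod_cast this
        · intro i
          unfold spreadIdeal
          rw [spreadExp_skip]
          · exact iha i
          · rintro v hv rfl
            exact hav hv
    · intro i
      refine Lin.of_zero (fun j p hp => ?_) _ _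
      ext m
      by_contra h
      obtain ⟨_, ⟨v, _, hv, _⟩, _⟩ := mem_spreadIdeal.1 hp.1 m (by simpa using h)
      omega

theorem mem_spreadExp_iff {d s a : ℕ} {m : Fin n →₀ ℕ} :
    m ∈ spreadExp V t d s a ↔ ∃ e : Fin d → Fin n, (∀ j : Fin d, e j ∈ V (s + (j : ℕ))) ∧
      (∀ (j : ℕ) (h : j + 1 < d),
        (e ⟨j, Nat.lt_of_succ_lt h⟩ : ℕ) + t (s + j) ≤ (e ⟨j + 1, h⟩ : ℕ)) ∧
      (∀ h : 0 < d, a ≤ (e ⟨0, h⟩ : ℕ)) ∧ m = ∑ j, Finsupp.single (e j) 1 := by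
  induction d generalizing s a m with
  | zero =>
    constructor
    · intro hm
      exact ⟨Fin.elim0, fun j => j.elim0, fun j h => absurd h (by omega),
        fun h => absurd h (by omega), by simpa [spreadExp] using hm⟩
    · rintro ⟨e, _, _, _, rfl⟩
      simp [spreadExp]
  | succ d ih =>
    constructor
    · rintro ⟨v, hv, hav, m', hm', rfl⟩
      obtain ⟨e, he, het, hea, rfl⟩ := ih.1 hm'
      refine ⟨Fin.cons v e, ?_, ?_, fun _ => hav, by rw [Fin.sum_univ_succ]; rfl⟩
      · intro j
        refine Fin.cases (by simpa using hv) (fun j => ?_) j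
        have := he j
        rw [show s + 1 + (j : ℕ) = s + (j.succ : ℕ) by simp; omega] at this
        exact this
      · intro j h
        cases j with
        | zero => exact hea (by omega)
        | succ j =>
          have := het j (by omega)
          rw [show s + 1 + j = s + (j + 1) by omega] at this
          exact this
    · rintro ⟨e, he, het, hea, rfl⟩
      refine ⟨e 0, he 0, hea (by omega), _, ih.2 ⟨fun j => e j.succ, ?_, ?_, ?_, rfl⟩,
        Fin.sum_univ_succ _⟩
      · intro j
        have := he j.succ
        rw [show s + (j.succ : ℕ) = s + 1 + j by simp; omega] at this
        exact this
      · intro j h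
        have := het (j + 1) (by omega)
        rw [show s + (j + 1) = s + 1 + j by omega] at this
        exact this
      · intro h
        exact het 0 (by omega)

/-- The parts are indexed by `ℕ` in `spreadIdeal`; those beyond the first `d` do not matter and are
taken empty. -/
theorem edgeIdeal_eq {d : ℕ} (W : Fin d → Finset (Fin n)) (t : ℕ → ℕ) :
    edgeIdeal K n d W t =
      spreadIdeal K (fun j => if h : j < d then W ⟨j, h⟩ else ∅) t d 0 0 := by
  unfold edgeIdeal spreadIdeal
  congr 1
  ext p
  simp only [spreadGens, Set.mem_ofPred_eq, Set.mem_image, mem_spreadExp_iff, IsSpreadEdge]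
  constructor
  · rintro ⟨e, ⟨h1, h2⟩, rfl⟩
    refine ⟨_, ⟨e, ?_, ?_, fun _ => Nat.zero_le _, rfl⟩, monomial_sum_one _ _⟩
    · intro j
      simpa using h1 j
    · simpa using h2
  · rintro ⟨_, ⟨e, h1, h2, _, rfl⟩, rfl⟩
    refine ⟨e, ⟨?_, ?_⟩, monomial_sum_one _ _⟩
    · intro j
      simpa using h1 j
    · simpa using h2

/-! ### Comparison with an arbitrary minimal resolution -/

section

variable {M : Type} [AddCommGroup M] [Module (MvPolynomial (Fin n) K) M]

theorem apply_eq_sum {κ : Type} [Fintype κ] [DecidableEq κ]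
    (f : (κ → MvPolynomial (Fin n) K) →ₗ[MvPolynomial (Fin n) K] M)
    (y : κ → MvPolynomial (Fin n) K) : f y = ∑ k, y k • f (Pi.single k 1) := by
  conv_lhs => rw [← Finset.univ_sum_single y]
  rw [map_sum]
  refine Finset.sum_congr rfl fun k _ => ?_
  rw [← map_smul, ← Pi.single_smul, smul_eq_mul, mul_one]

theorem constantCoeff_eq_zero {z : ℤ} {p : MvPolynomial (Fin n) K} (hp : p ∈ hom K n z)
    (hz : z ≠ 0) : constantCoeff p = 0 := by
  by_contra h
  have := hp 0 h
  simp only [map_zero, Nat.cast_zero] at this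
  exact hz this.symm

theorem eq_zero_of_constantCoeff {p : MvPolynomial (Fin n) K} (hp : p ∈ hom K n 0)
    (h : constantCoeff p = 0) : p = 0 := by
  ext m
  by_contra h'
  have hm := hp m (by simpa using h')
  have : m = 0 := (Finsupp.degree_eq_zero_iff m).1 (by exact_mod_cast hm)
  subst this
  exact h' (by simpa [constantCoeff_eq] using h)

variable {gr : ℤ → AddSubgroup M} {d : ℤ} {κ : Type} [Fintype κ] {dg : κ → ℤ} {w : κ → M}

/-- A minimal system `w` of homogeneous generators of a module generated in degree `d` lies in
degree `d`. Minimality is the last hypothesis: relations have coefficients without constant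
term. -/
theorem Lin.degree_eq (h : Lin K n 1 M gr d) (hw : ∀ k, w k ∈ gr (dg k))
    (hs : ∀ j, ∀ m ∈ gr j, ∃ y ∈ freePc K n dg j, ∑ k, y k • w k = m)
    (hmin : ∀ y : κ → MvPolynomial (Fin n) K, ∑ k, y k • w k = 0 →
      ∀ k, constantCoeff (y k) = 0) (k : κ) : dg k = d := by
  classical
  obtain ⟨ι, _, v, hv, hvs, -⟩ := h
  choose b hb hbv using fun l => hs d (v l) (hv l)
  obtain ⟨y, hy, hyw⟩ := hvs _ _ (hw k)
  by_contra hne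
  have h0 := hmin (Pi.single k 1 - ∑ l, y l • b l) (by
    have h1 := apply_eq_sum (Fintype.linearCombination (MvPolynomial (Fin n) K) w)
      (Pi.single k 1 - ∑ l, y l • b l)
    rw [map_sub, map_sum] at h1
    simp only [map_smul, Fintype.linearCombination_apply_single, one_smul] at h1
    rw [← h1, sub_eq_zero]
    simp only [Fintype.linearCombination_apply, hbv]
    exact hyw.symm) k
  have h2 : ∀ l, constantCoeff (y l) = 0 := fun l =>
    constantCoeff_eq_zero (hy l) (sub_ne_zero.2 hne)
  simp [h2] at h0

/-- The relations of a minimal system of homogeneous generators of a linear module are linear: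
minimal covers are unique up to isomorphism, so the cover in the definition of `Lin` may be
replaced by any other minimal one. -/
theorem Lin.kernel {i : ℕ} (h : Lin K n (i + 1) M gr d) (hw : ∀ k, w k ∈ gr (dg k))
    (hs : ∀ j, ∀ m ∈ gr j, ∃ y ∈ freePc K n dg j, ∑ k, y k • w k = m)
    (hmin : ∀ y : κ → MvPolynomial (Fin n) K, ∑ k, y k • w k = 0 →
      ∀ k, constantCoeff (y k) = 0) :
    Lin K n i (κ → MvPolynomial (Fin n) K) (kerPc dg w) (d + 1) := by
  classical
  cases i with
  | zero => trivial
  | succ i =>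
    obtain ⟨ι, _, v, hv, hvs, hvk⟩ := h
    have hdg : dg = fun _ => d := by
      funext k
      exact Lin.degree_eq (gr := gr) ⟨ι, _, v, hv, hvs, trivial⟩ hw hs hmin k
    subst hdg
    choose b hb hbv using fun l => hs d (v l) (hv l)
    choose a ha haw using fun k => hvs d (w k) (hw k)
    let S := MvPolynomial (Fin n) K
    let β : (ι → S) →ₗ[S] (κ → S) := Fintype.linearCombination S b
    let α : (κ → S) →ₗ[S] (ι → S) := Fintype.linearCombination S a
    let pv : (ι → S) →ₗ[S] M := Fintype.linearCombination S v
    let pw : (κ → S) →ₗ[S] M := Fintype.linearCombination S w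
    have hβ : ∀ l, β (Pi.single l 1) = b l := fun l => by
      simp only [β, Fintype.linearCombination_apply_single, one_smul]
    have hα : ∀ k, α (Pi.single k 1) = a k := fun k => by
      simp only [α, Fintype.linearCombination_apply_single, one_smul]
    have hpv : ∀ l, pv (Pi.single l 1) = v l := fun l => by
      simp only [pv, Fintype.linearCombination_apply_single, one_smul]
    have hpw : ∀ k, pw (Pi.single k 1) = w k := fun k => by
      simp only [pw, Fintype.linearCombination_apply_single, one_smul]
    have hpβ : pw ∘ₗ β = pv := by
      refine (Pi.basisFun S ι).ext fun l => ?_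
      rw [Pi.basisFun_apply, LinearMap.comp_apply, hβ, hpv]
      exact hbv l
    have hpα : pv ∘ₗ α = pw := by
      refine (Pi.basisFun S κ).ext fun k => ?_
      rw [Pi.basisFun_apply, LinearMap.comp_apply, hα, hpw]
      exact haw k
    have hβm : ∀ j, ∀ x ∈ freePc K n (fun _ : ι => d) j, β x ∈ freePc K n (fun _ : κ => d) j :=
      fun j x hx => sum_mem_gr (isGr_freePc _) hb hx
    have hαm : ∀ j, ∀ x ∈ freePc K n (fun _ : κ => d) j, α x ∈ freePc K n (fun _ : ι => d) j :=
      fun j x hx => sum_mem_gr (isGr_freePc _) ha hx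
    have hsingle : ∀ (θ : Type) [DecidableEq θ] (l : θ),
        (Pi.single l 1 : θ → S) ∈ freePc K n (fun _ : θ => d) d := by
      intro θ _ l l'
      rw [sub_self, Pi.single_apply]
      split_ifs
      · exact one_mem_hom
      · exact zero_mem _
    -- Neither cover has relations in degree `d`: those of `v` are generated in degree `d + 1`, and
    -- those of `w` have no constant coefficients. Hence `α` and `β` are mutually inverse.
    have hv0 : ∀ x ∈ freePc K n (fun _ : ι => d) d, pv x = 0 → x = 0 := by
      intro x hx hx0
      obtain ⟨θ, _, u, -, hus, -⟩ := hvk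
      obtain ⟨y, hy, rfl⟩ := hus d x (mem_kerPc.2 ⟨hx, hx0⟩)
      refine Finset.sum_eq_zero fun k _ => ?_
      rw [hom_neg (sub_neg.2 (lt_add_one d)) (hy k), zero_smul]
    have hw0 : ∀ x ∈ freePc K n (fun _ : κ => d) d, pw x = 0 → x = 0 := by
      intro x hx hx0
      funext k
      refine eq_zero_of_constantCoeff ?_ (hmin x hx0 k)
      simpa using hx k
    have hαβ : α ∘ₗ β = LinearMap.id := by
      refine (Pi.basisFun S ι).ext fun l => ?_
      rw [Pi.basisFun_apply, LinearMap.id_apply, ← sub_eq_zero]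
      refine hv0 _ (sub_mem (hαm _ _ (hβm _ _ (hsingle ι l))) (hsingle ι l)) ?_
      rw [map_sub, LinearMap.comp_apply, ← LinearMap.comp_apply pv, hpα, ← LinearMap.comp_apply,
        hpβ, sub_self]
    have hβα : β ∘ₗ α = LinearMap.id := by
      refine (Pi.basisFun S κ).ext fun l => ?_
      rw [Pi.basisFun_apply, LinearMap.id_apply, ← sub_eq_zero]
      refine hw0 _ (sub_mem (hβm _ _ (hαm _ _ (hsingle κ l))) (hsingle κ l)) ?_
      rw [map_sub, LinearMap.comp_apply, ← LinearMap.comp_apply pw, hpβ, ← LinearMap.comp_apply,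
        hpα, sub_self]
    refine hvk.map β ?_ ?_ ?_
    · intro x hx
      have := LinearMap.congr_fun hαβ x
      rw [LinearMap.comp_apply, hx, map_zero] at this
      exact this.symm
    · intro j x hx
      rw [mem_kerPc] at hx
      exact mem_kerPc.2 ⟨hβm j x hx.1, (LinearMap.congr_fun hpβ x).trans hx.2⟩
    · intro j y hy
      rw [mem_kerPc] at hy
      exact ⟨α y, mem_kerPc.2 ⟨hαm j y hy.1, (LinearMap.congr_fun hpα y).trans hy.2⟩,
        LinearMap.congr_fun hβα y⟩

/-- In a map of graded free modules given by a matrix with homogeneous entries, a preimage of a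
homogeneous element may be replaced by its homogeneous component. -/
theorem sum_comp_smul {w : κ → MvPolynomial (Fin n) K} {e j : ℤ}
    (hw : ∀ k, w k ∈ hom K n (dg k - e)) (y : κ → MvPolynomial (Fin n) K)
    (hy : ∑ k, y k * w k ∈ hom K n (j - e)) :
    ∑ k, comp (j - dg k) (y k) * w k = ∑ k, y k * w k := by
  conv_rhs => rw [← comp_eq_self hy, comp_sum]
  refine Finset.sum_congr rfl fun k _ => ?_
  rw [comp_mul (hw k), show j - e - (dg k - e) = j - dg k by ring]

end

/-- A graded minimal free resolution of an ideal `J` that is linear, in the sense of `Lin`, from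
degree `d` has all its basis elements in the expected degrees. -/
theorem degree_of_lin {J : Ideal (MvPolynomial (Fin n) K)} {d : ℕ}
    (hJ : ∀ i, Lin K n i _ (idealPc J) d) {r : ℕ → ℕ} {dg : (i : ℕ) → Fin (r i) → ℕ}
    {φ : (i : ℕ) → ((Fin (r (i + 1)) → MvPolynomial (Fin n) K) →ₗ[MvPolynomial (Fin n) K]
      (Fin (r i) → MvPolynomial (Fin n) K))}
    {ε : (Fin (r 0) → MvPolynomial (Fin n) K) →ₗ[MvPolynomial (Fin n) K]
      MvPolynomial (Fin n) K}
    (hres : IsMinimalGradedFreeResolution K n J r dg φ ε) (i : ℕ) :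
    (∀ k, dg i k = i + d) ∧ ∀ N, Lin K n N (Fin (r i) → MvPolynomial (Fin n) K)
      (fun j => freePc K n (fun k => (dg i k : ℤ)) j ⊓ (LinearMap.range (φ i)).toAddSubgroup)
      (d + i + 1) := by
  obtain ⟨hε, hexε, hex, hdegε, hdeg, hmin⟩ := hres
  have hconst : ∀ i, ∀ y ∈ LinearMap.range (φ i), ∀ k, constantCoeff (y k) = 0 := by
    rintro i _ ⟨x, rfl⟩ k
    rw [apply_eq_sum (φ i) x, Finset.sum_apply, map_sum]
    refine Finset.sum_eq_zero fun l _ => ?_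
    rw [Pi.smul_apply, smul_eq_mul, map_mul, hmin, mul_zero]
  have hentry : ∀ i k j, φ i (Pi.single k 1) j ∈ hom K n ((dg (i + 1) k : ℤ) - dg i j) := by
    intro i k j
    rcases hdeg i k j with h | ⟨c, hc, h⟩
    · rw [h]
      exact zero_mem _
    · have := mem_hom_of_isHomogeneous h
      rw [hc]
      push_cast
      rwa [add_sub_cancel_left]
  induction i with
  | zero =>
    have hw : ∀ k, ε (Pi.single k 1) ∈ idealPc J (dg 0 k) := by
      intro k
      refine ⟨?_, mem_hom_of_isHomogeneous (hdegε k)⟩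
      change _ ∈ J
      rw [← hε]
      exact LinearMap.mem_range_self _ _
    have hs : ∀ j, ∀ m ∈ idealPc J j, ∃ y ∈ freePc K n (fun k => (dg 0 k : ℤ)) j,
        ∑ k, y k • ε (Pi.single k 1) = m := by
      rintro j m ⟨hm, hmj⟩
      change m ∈ J at hm
      rw [← hε] at hm
      obtain ⟨y, rfl⟩ := hm
      refine ⟨fun k => comp (j - dg 0 k) (y k), fun k => comp_mem _ _, ?_⟩
      rw [apply_eq_sum] at hmj ⊢
      simp only [smul_eq_mul] at hmj ⊢
      refine sum_comp_smul (e := 0) (fun k => ?_) y (by rwa [sub_zero])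
      rw [sub_zero]
      exact (hw k).2
    have hm : ∀ y : Fin (r 0) → MvPolynomial (Fin n) K, ∑ k, y k • ε (Pi.single k 1) = 0 →
        ∀ k, constantCoeff (y k) = 0 := by
      intro y hy
      rw [← apply_eq_sum] at hy
      refine hconst 0 y ?_
      rw [← hexε]
      exact hy
    refine ⟨fun k => ?_, fun N => ?_⟩
    · have := (hJ 1).degree_eq hw hs hm k
      omega
    · have := (hJ (N + 1)).kernel hw hs hm
      rw [Nat.cast_zero, add_zero]
      convert this using 1
      funext j
      ext y
      rw [mem_kerPc, ← apply_eq_sum, ← hexε]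
      rfl
  | succ i ih =>
    obtain ⟨-, ihL⟩ := ih
    have hw : ∀ k, φ i (Pi.single k 1) ∈ freePc K n (fun k => (dg i k : ℤ)) (dg (i + 1) k) ⊓
        (LinearMap.range (φ i)).toAddSubgroup :=
      fun k => ⟨fun l => hentry i k l, LinearMap.mem_range_self _ _⟩
    have hs : ∀ j, ∀ m ∈ freePc K n (fun k => (dg i k : ℤ)) j ⊓
        (LinearMap.range (φ i)).toAddSubgroup, ∃ y ∈ freePc K n (fun k => (dg (i + 1) k : ℤ)) j,
        ∑ k, y k • φ i (Pi.single k 1) = m := by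
      rintro j m ⟨hmj, y, rfl⟩
      refine ⟨fun k => comp (j - dg (i + 1) k) (y k), fun k => comp_mem _ _, ?_⟩
      funext l
      have h1 := hmj l
      rw [apply_eq_sum] at h1 ⊢
      simp only [Finset.sum_apply, Pi.smul_apply, smul_eq_mul] at h1 ⊢
      exact sum_comp_smul (fun k => hentry i k l) y h1
    have hm : ∀ y : Fin (r (i + 1)) → MvPolynomial (Fin n) K,
        ∑ k, y k • φ i (Pi.single k 1) = 0 → ∀ k, constantCoeff (y k) = 0 := by
      intro y hy
      rw [← apply_eq_sum] at hy
      refine hconst (i + 1) y ?_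
      rw [← hex i]
      exact hy
    refine ⟨fun k => ?_, fun N => ?_⟩
    · have := (ihL 1).degree_eq hw hs hm k
      omega
    · have := (ihL (N + 1)).kernel hw hs hm
      rw [show (d : ℤ) + ((i + 1 : ℕ) : ℤ) + 1 = d + i + 1 + 1 by push_cast; ring]
      convert this using 1
      funext j
      ext y
      rw [mem_kerPc, ← apply_eq_sum, ← hex i]
      rfl

end Graded

end SpreadLin

/-- **Theorem.**  The edge ideal `I(K_V^𝐭)` has a `d`-linear resolution: in any minimal
graded free resolution of `I(K_V^𝐭)`, all basis elements in homological degree `i` have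
internal degree `i + d`; equivalently `β_{i,j}(I(K_V^𝐭)) = 0` for all `i` and all
`j ≠ i + d`. -/
theorem edgeIdeal_linear_resolution
    (K : Type) [Field K] (n d : ℕ) (hd : 0 < d)
    (V : Fin d → Finset (Fin n)) (t : ℕ → ℕ)
    (ht : ∀ i, 1 ≤ t i)
    (hV : ∀ i j : Fin d, i < j → ∀ p ∈ V i, ∀ q ∈ V j, (p : ℕ) < (q : ℕ))
    (hne : ∀ j, (V j).Nonempty)
    (hiso : ∀ (j : Fin d), ∀ v ∈ V j, ∃ e, IsSpreadEdge n d V t e ∧ e j = v)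
    (r : ℕ → ℕ) (dg : (i : ℕ) → Fin (r i) → ℕ)
    (φ : (i : ℕ) → ((Fin (r (i + 1)) → MvPolynomial (Fin n) K) →ₗ[MvPolynomial (Fin n) K]
      (Fin (r i) → MvPolynomial (Fin n) K)))
    (ε : (Fin (r 0) → MvPolynomial (Fin n) K) →ₗ[MvPolynomial (Fin n) K]
      MvPolynomial (Fin n) K)
    (hres : IsMinimalGradedFreeResolution K n (edgeIdeal K n d V t) r dg φ ε) :
    ∀ (i : ℕ) (k : Fin (r i)), dg i k = i + d := by
  rw [SpreadLin.edgeIdeal_eq] at hres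
  exact fun i => (SpreadLin.degree_of_lin (SpreadLin.lin_spreadIdeal d 0 0) hres i).1

end
end
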